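/- arXiv:2503.01247 — 3 statements merged into one kernel-verified Lean document; each statement's English description precedes it below -/
import Mathlib

section
/- For all σ-structures A and B and every k ∈ ℕ, there exists a pathwise embedding F_k^I(A) → F_k^I(B) in EM(E_k^I) if, and only if, Duplicator has a winning strategy in the k-round existential Ehrenfeucht–Fraïssé game from A to B. -/
/-- A relational vocabulary: a type of relation symbols together with their arities. -/
structure Vocab : Type 1 where
  Rel : Type
  ar : Rel → ℕ

/-- A structure for the relational vocabulary `V` with carrier `α`. -/
structure Str (V : Vocab) (α : Type) : Type where
  rel : ∀ r : V.Rel, (Fin (V.ar r) → α) → Prop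
/-- The relation formed by a list of pairs of chosen elements is a partial isomorphism
between `A` and `B`: the assignment is functional and injective, and it preserves and
reflects the interpretations of all relation symbols. -/
def IsPartialIso {V : Vocab} {α β : Type} (A : Str V α) (B : Str V β)
    (h : List (α × β)) : Prop :=
  (∀ i j : Fin h.length, ((h.get i).1 = (h.get j).1 ↔ (h.get i).2 = (h.get j).2)) ∧
  (∀ (r : V.Rel) (v : Fin (V.ar r) → Fin h.length),
    A.rel r (fun t => (h.get (v t)).1) ↔ B.rel r (fun t => (h.get (v t)).2))

/-- `EFWin A B n h` : Duplicator has a winning strategy in the remaining `n` rounds of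
the existential Ehrenfeucht–Fraïssé game from `A` to `B`, where `h` records the pairs of
elements chosen so far.  In each round Spoiler chooses an element of `A` and Duplicator
responds with an element of `B`; at the end the chosen pairs must form a partial
isomorphism. -/
def EFWin {V : Vocab} {α β : Type} (A : Str V α) (B : Str V β) :
    ℕ → List (α × β) → Prop
  | 0, h => IsPartialIso A B h
  | n + 1, h => ∀ a : α, ∃ b : β, EFWin A B n (h ++ [(a, b)])
/-- An object datum for the Eilenberg–Moore category `EM(E_k^I)` of the
Ehrenfeucht–Fraïssé comonad over `σ^I = σ ∪ {I}`: a `σ`-structure together with an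
interpretation `ieq` of the fresh binary relation symbol `I` and a (forest) order. -/
structure EObj (V : Vocab) : Type 1 where
  carrier : Type
  rel : ∀ r : V.Rel, (Fin (V.ar r) → carrier) → Prop
  ieq : carrier → carrier → Prop
  le : carrier → carrier → Prop

namespace EObj

variable {V : Vocab}

/-- Gaifman adjacency, with respect to all relations of `σ ∪ {I}`. -/
def Adj (X : EObj V) (x y : X.carrier) : Prop :=
  x ≠ y ∧ ((∃ r v, X.rel r v ∧ (∃ i, v i = x) ∧ (∃ j, v j = y)) ∨ X.ieq x y ∨ X.ieq y x)

/-- The covering relation of the order of `X`. -/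
def Cover (X : EObj V) (x y : X.carrier) : Prop :=
  X.le x y ∧ x ≠ y ∧ ∀ z, X.le x z → X.le z y → z = x ∨ z = y

/-- Roots, i.e. minimal elements of the forest order. -/
def IsRoot (X : EObj V) (x : X.carrier) : Prop := ∀ y, X.le y x → y = x

/-- `X` is (the datum of) a coalgebra for `E_k^I`: a forest-ordered `σ^I`-structure of
height at most `k` in which Gaifman-adjacent elements are comparable. -/
def IsCoalg (k : ℕ) (X : EObj V) : Prop :=
  (∀ x, X.le x x) ∧ (∀ x y z, X.le x y → X.le y z → X.le x z) ∧
  (∀ x y, X.le x y → X.le y x → x = y) ∧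
  (∀ x : X.carrier, {y | X.le y x}.Finite ∧ {y | X.le y x}.ncard ≤ k + 1 ∧
    ∀ y z, X.le y x → X.le z x → X.le y z ∨ X.le z y) ∧
  (∀ x y, X.Adj x y → X.le x y ∨ X.le y x)

/-- Morphisms of `EM(E_k^I)`: homomorphisms of `σ^I`-structures that are also forest
morphisms (they send roots to roots and preserve the covering relation). -/
def IsHom (X Y : EObj V) (f : X.carrier → Y.carrier) : Prop :=
  (∀ r v, X.rel r v → Y.rel r fun i => f (v i)) ∧
  (∀ x y, X.ieq x y → Y.ieq (f x) (f y)) ∧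
  (∀ x, X.IsRoot x → Y.IsRoot (f x)) ∧
  (∀ x y, X.Cover x y → Y.Cover (f x) (f y))

/-- Embeddings: morphisms that are injective and reflect all relations. -/
def IsEmb (X Y : EObj V) (f : X.carrier → Y.carrier) : Prop :=
  IsHom X Y f ∧ Function.Injective f ∧
  (∀ r v, (Y.rel r fun i => f (v i)) → X.rel r v) ∧
  (∀ x y, Y.ieq (f x) (f y) → X.ieq x y)

/-- Paths: objects whose forest order is finite and linear. -/
def IsPath (X : EObj V) : Prop :=
  Finite X.carrier ∧ ∀ x y : X.carrier, X.le x y ∨ X.le y x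

/-- Pathwise embeddings: morphisms `f : X → Y` such that for every path embedding
`m : P ↪ X` the composite `f ∘ m` is a path embedding. -/
def IsPWEmb (k : ℕ) (X Y : EObj V) (f : X.carrier → Y.carrier) : Prop :=
  IsHom X Y f ∧ ∀ P : EObj V, IsCoalg k P → IsPath P →
    ∀ m : P.carrier → X.carrier, IsEmb P X m → IsEmb P Y fun p => f (m p)

/-- Open morphisms: every commutative square of path embeddings over `f` admits a
diagonal filler. -/
def IsOpen (k : ℕ) (X Y : EObj V) (f : X.carrier → Y.carrier) : Prop :=
  ∀ P Q : EObj V, IsCoalg k P → IsPath P → IsCoalg k Q → IsPath Q →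
    ∀ (i : P.carrier → Q.carrier) (m : P.carrier → X.carrier)
      (n : Q.carrier → Y.carrier),
      IsEmb P Q i → IsEmb P X m → IsEmb Q Y n → (∀ x, n (i x) = f (m x)) →
      ∃ d : Q.carrier → X.carrier, IsHom Q X d ∧ (∀ x, d (i x) = m x) ∧ ∀ q, f (d q) = n q

end EObj
/-- The co-free coalgebra `F_k^I(A) = (E_k J(A), ⊑)` on `J(A)`: non-empty sequences of
elements of `A` of length at most `k`, ordered by the prefix order.  A tuple of sequences
is related iff the sequences are pairwise comparable and their last elements are related
in `J(A)`; the fresh relation `I` is interpreted as comparability plus equality of last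
elements (the diagonal of `J`). -/
def FE (V : Vocab) (k : ℕ) {α : Type} (A : Str V α) : EObj V where
  carrier := {l : List α // l ≠ [] ∧ l.length ≤ k}
  rel r v :=
    (∀ i j, (v i).1 <+: (v j).1 ∨ (v j).1 <+: (v i).1) ∧
    A.rel r fun i => (v i).1.getLast (v i).2.1
  ieq s t := ((s.1 <+: t.1) ∨ (t.1 <+: s.1)) ∧ s.1.getLast s.2.1 = t.1.getLast t.2.1
  le s t := s.1 <+: t.1

/-!
A strategy of Duplicator is a length-preserving, prefix-preserving map `s` from Spoiler's sequences
to Duplicator's sequences, and such maps are exactly the forest morphisms `F_k^I(A) → F_k^I(B)`.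
Between coalgebras, a forest morphism is a pathwise embedding precisely when it preserves and
reflects all relations of `σ ∪ {I}` on chains, since the downward closure of a finite chain is a
path. A finite chain in `F_k^I(A)` consists of prefixes of one sequence `l`, so for `s` this
condition says that `l` and `s l` form a partial isomorphism, the relation `I` accounting for
equalities. If `A` is nonempty, every shorter play extends to one of length `k`, so it suffices to
win at the end; if `A` is empty, only the empty play exists, and it is a partial isomorphism when
there are no nullary relation symbols.
-/

open Relation (SymmGen)

namespace EObj

variable {V : Vocab} {X Y Z : EObj V} {k k' : ℕ} {f : X.carrier → Y.carrier}

/-- Forest morphisms: maps preserving roots and the covering relation. -/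
structure IsForestHom (X Y : EObj V) (f : X.carrier → Y.carrier) : Prop where
  map_isRoot : ∀ x, X.IsRoot x → Y.IsRoot (f x)
  map_cover : ∀ x y, X.Cover x y → Y.Cover (f x) (f y)

/-- The map `f` preserves and reflects all relations of `σ ∪ {I}` on families of pairwise
comparable elements. Together with `IsForestHom` this describes pathwise embeddings without
quantifying over paths. -/
structure IsChainwiseEmb (X Y : EObj V) (f : X.carrier → Y.carrier) : Prop where
  rel_iff : ∀ r (v : Fin (V.ar r) → X.carrier), (∀ i j, SymmGen X.le (v i) (v j)) →
    (X.rel r v ↔ Y.rel r fun i => f (v i))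
  ieq_iff : ∀ x y, SymmGen X.le x y → (X.ieq x y ↔ Y.ieq (f x) (f y))

theorem IsHom.isForestHom (hf : IsHom X Y f) : IsForestHom X Y f :=
  ⟨hf.2.2.1, hf.2.2.2⟩

theorem IsHom.comp {g : Y.carrier → Z.carrier} (hg : IsHom Y Z g) (hf : IsHom X Y f) :
    IsHom X Z fun x => g (f x) :=
  ⟨fun r v h => hg.1 r _ (hf.1 r v h), fun x y h => hg.2.1 _ _ (hf.2.1 x y h),
    fun x h => hg.2.2.1 _ (hf.2.2.1 x h), fun x y h => hg.2.2.2 _ _ (hf.2.2.2 x y h)⟩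

/-- The forest order of a coalgebra, as a Mathlib partial order. -/
abbrev IsCoalg.partialOrder (hX : IsCoalg k X) : PartialOrder X.carrier where
  le := X.le
  le_refl := hX.1
  le_trans := hX.2.1
  le_antisymm := hX.2.2.1

theorem IsCoalg.finite_setOf_le (hX : IsCoalg k X) (x : X.carrier) : {y | X.le y x}.Finite :=
  (hX.2.2.2.1 x).1

theorem IsCoalg.symmGen_of_le (hX : IsCoalg k X) {x y z : X.carrier} (hy : X.le y x)
    (hz : X.le z x) : SymmGen X.le y z :=
  (hX.2.2.2.1 x).2.2 y z hy hz

theorem IsCoalg.symmGen_of_rel (hX : IsCoalg k X) {r : V.Rel} {v : Fin (V.ar r) → X.carrier}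
    (h : X.rel r v) (i j : Fin (V.ar r)) : SymmGen X.le (v i) (v j) := by
  by_cases hij : v i = v j
  · exact .inl (hij ▸ hX.1 _)
  · exact hX.2.2.2.2 _ _ ⟨hij, .inl ⟨r, v, h, ⟨i, rfl⟩, ⟨j, rfl⟩⟩⟩

theorem IsCoalg.symmGen_of_ieq (hX : IsCoalg k X) {x y : X.carrier} (h : X.ieq x y) :
    SymmGen X.le x y := by
  by_cases hxy : x = y
  · exact .inl (hxy ▸ hX.1 _)
  · exact hX.2.2.2.2 _ _ ⟨hxy, .inr (.inl h)⟩

theorem IsForestHom.strictMono (hf : IsForestHom X Y f) (hX : IsCoalg k X) (hY : IsCoalg k' Y) :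
    @StrictMono _ _ hX.partialOrder.toPreorder hY.partialOrder.toPreorder f := by
  let := hX.partialOrder
  let := hY.partialOrder
  let : LocallyFiniteOrder X.carrier := .ofFiniteIcc fun _ y =>
    (hX.finite_setOf_le y).subset fun _ hz => hz.2
  refine (strictMono_iff_forall_covBy f).2 fun x y hxy => ?_
  have hcover := hf.map_cover x y ⟨hxy.le, hxy.ne, fun _ => hxy.eq_or_eq⟩
  exact lt_of_le_of_ne hcover.1 hcover.2.1

theorem IsForestHom.map_le (hf : IsForestHom X Y f) (hX : IsCoalg k X) (hY : IsCoalg k' Y)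
    {x y : X.carrier} (hxy : X.le x y) : Y.le (f x) (f y) :=
  @StrictMono.monotone _ _ hX.partialOrder hY.partialOrder.toPreorder f (hf.strictMono hX hY) _ _
    hxy

theorem IsForestHom.symmGen_map (hf : IsForestHom X Y f) (hX : IsCoalg k X)
    (hY : IsCoalg k' Y) {x y : X.carrier} (hxy : SymmGen X.le x y) :
    SymmGen Y.le (f x) (f y) :=
  hxy.imp (hf.map_le hX hY) (hf.map_le hX hY)

theorem IsForestHom.eq_of_map_eq (hf : IsForestHom X Y f) (hX : IsCoalg k X)
    (hY : IsCoalg k' Y) {x y : X.carrier} (hxy : SymmGen X.le x y) (h : f x = f y) : x = y := by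
  let := hX.partialOrder
  let := hY.partialOrder
  have hmono : StrictMono f := hf.strictMono hX hY
  rcases hxy with hxy | hyx
  · exact eq_of_le_of_not_lt hxy fun hlt => (hmono hlt).ne h
  · exact (eq_of_le_of_not_lt hyx fun hlt => (hmono hlt).ne' h).symm

/-- The substructure of `X` induced on a set of elements. -/
def restrict (X : EObj V) (s : Set X.carrier) : EObj V where
  carrier := s
  rel r v := X.rel r fun i => (v i).1
  ieq x y := X.ieq x.1 y.1
  le x y := X.le x.1 y.1

theorem IsCoalg.restrict (hX : IsCoalg k X) (s : Set X.carrier) : IsCoalg k (X.restrict s) := by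
  refine ⟨fun x => hX.1 _, fun x y z => hX.2.1 _ _ _,
    fun x y hxy hyx => Subtype.ext (hX.2.2.1 _ _ hxy hyx), fun x => ?_, ?_⟩
  · obtain ⟨hfin, hcard, htotal⟩ := hX.2.2.2.1 x.1
    refine ⟨hfin.preimage Subtype.val_injective.injOn, ?_, fun y z => htotal _ _⟩
    exact (Set.ncard_le_ncard_of_injOn Subtype.val (fun _ hy => hy)
      Subtype.val_injective.injOn hfin).trans hcard
  · rintro x y ⟨-, ⟨r, v, hv, ⟨i, rfl⟩, ⟨j, rfl⟩⟩ | hxy | hyx⟩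
    · exact hX.symmGen_of_rel hv i j
    · exact hX.symmGen_of_ieq hxy
    · exact (hX.symmGen_of_ieq hyx).symm

theorem isEmb_restrict_val {s : Set X.carrier} (hs : ∀ x y, X.le y x → x ∈ s → y ∈ s) :
    IsEmb (X.restrict s) X Subtype.val := by
  refine ⟨⟨fun _ _ h => h, fun _ _ h => h, ?_, ?_⟩, Subtype.val_injective, fun _ _ h => h,
    fun _ _ h => h⟩
  · intro x hx y hyx
    exact congrArg Subtype.val (hx ⟨y, hs x.1 y hyx x.2⟩ hyx)
  · rintro x y ⟨hle, hne, hbetween⟩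
    refine ⟨hle, Subtype.coe_ne_coe.2 hne, fun z hxz hzy => ?_⟩
    exact (hbetween ⟨z, hs y.1 z hzy y.2⟩ hxz hzy).imp (congrArg Subtype.val) (congrArg Subtype.val)

/-- The downward closure of a family of elements of `X`. -/
def below (X : EObj V) {ι : Type} (v : ι → X.carrier) : Set X.carrier :=
  {x | ∃ i, X.le x (v i)}

section Below

variable {ι : Type} {v : ι → X.carrier}

theorem IsCoalg.isPath_restrict_below [Finite ι] (hX : IsCoalg k X)
    (hv : ∀ i j, SymmGen X.le (v i) (v j)) : IsPath (X.restrict (X.below v)) := by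
  constructor
  · have hfin : (X.below v).Finite := by
      rw [below, Set.ofPred_exists]
      exact Set.finite_iUnion fun i => hX.finite_setOf_le (v i)
    exact hfin.to_subtype
  · rintro ⟨x, i, hxi⟩ ⟨y, j, hyj⟩
    rcases hv i j with hij | hji
    · exact hX.symmGen_of_le (hX.2.1 _ _ _ hxi hij) hyj
    · exact hX.symmGen_of_le hxi (hX.2.1 _ _ _ hyj hji)

theorem IsPWEmb.isEmb_restrict_below [Finite ι] (hf : IsPWEmb k X Y f) (hX : IsCoalg k X)
    (hv : ∀ i j, SymmGen X.le (v i) (v j)) :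
    IsEmb (X.restrict (X.below v)) Y fun x => f x.1 := by
  refine hf.2 _ (hX.restrict _) (hX.isPath_restrict_below hv) _ (isEmb_restrict_val ?_)
  rintro x y hyx ⟨i, hxi⟩
  exact ⟨i, hX.2.1 _ _ _ hyx hxi⟩

end Below

theorem IsPWEmb.isChainwiseEmb (hf : IsPWEmb k X Y f) (hX : IsCoalg k X) :
    IsChainwiseEmb X Y f where
  rel_iff r v hv := by
    refine ⟨hf.1.1 r v, fun h => ?_⟩
    obtain ⟨-, -, hreflect, -⟩ := hf.isEmb_restrict_below hX hv
    exact hreflect r (fun i => ⟨v i, i, hX.1 _⟩) h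
  ieq_iff x y hxy := by
    refine ⟨hf.1.2.1 x y, fun h => ?_⟩
    have hpair : ∀ i j, SymmGen X.le (![x, y] i) (![x, y] j) := by
      simpa [Fin.forall_fin_two] using
        ⟨⟨.inl (hX.1 x), hxy⟩, hxy.symm, .inl (hX.1 y)⟩
    obtain ⟨-, -, -, hreflect⟩ := hf.isEmb_restrict_below hX hpair
    exact hreflect ⟨x, 0, hX.1 x⟩ ⟨y, 1, hX.1 y⟩ h

theorem IsForestHom.isHom (hf : IsForestHom X Y f) (hemb : IsChainwiseEmb X Y f)
    (hX : IsCoalg k X) : IsHom X Y f :=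
  ⟨fun r v h => (hemb.rel_iff r v (hX.symmGen_of_rel h)).1 h,
    fun x y h => (hemb.ieq_iff x y (hX.symmGen_of_ieq h)).1 h, hf.map_isRoot, hf.map_cover⟩

theorem IsForestHom.isPWEmb (hf : IsForestHom X Y f) (hemb : IsChainwiseEmb X Y f)
    (hX : IsCoalg k X) (hY : IsCoalg k' Y) : IsPWEmb k X Y f := by
  refine ⟨hf.isHom hemb hX, fun P hP hpath m ⟨hm, hinj, hrel, hieq⟩ => ?_⟩
  have hchain (p q : P.carrier) : SymmGen X.le (m p) (m q) :=
    hm.isForestHom.symmGen_map hP hX (hpath.2 p q)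
  exact ⟨(hf.isHom hemb hX).comp hm, fun p q h => hinj (hf.eq_of_map_eq hX hY (hchain p q) h),
    fun r v h => hrel r v ((hemb.rel_iff r _ fun _ _ => hchain _ _).2 h),
    fun p q h => hieq p q ((hemb.ieq_iff _ _ (hchain p q)).2 h)⟩

theorem isPWEmb_iff (hX : IsCoalg k X) (hY : IsCoalg k' Y) :
    IsPWEmb k X Y f ↔ IsForestHom X Y f ∧ IsChainwiseEmb X Y f :=
  ⟨fun hf => ⟨hf.1.isForestHom, hf.isChainwiseEmb hX⟩,
    fun ⟨hf, hemb⟩ => hf.isPWEmb hemb hX hY⟩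

end EObj

section PartialIso

variable {V : Vocab} {α β : Type} {A : Str V α} {B : Str V β}

theorem IsPartialIso.of_isPrefix {h h' : List (α × β)} (H : IsPartialIso A B h')
    (hp : h <+: h') : IsPartialIso A B h := by
  obtain ⟨t, rfl⟩ := hp
  have hle : h.length ≤ (h ++ t).length := by simp
  refine ⟨fun i j => ?_, fun r v => ?_⟩
  · simpa using H.1 (Fin.castLE hle i) (Fin.castLE hle j)
  · simpa using H.2 r fun t => Fin.castLE hle (v t)

theorem isPartialIso_nil (har : ∀ r : V.Rel, V.ar r ≠ 0) : IsPartialIso A B [] :=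
  ⟨fun i => i.elim0, fun r v => (v ⟨0, Nat.pos_of_ne_zero (har r)⟩).elim0⟩

theorem isPartialIso_zip_iff {l : List α} {l' : List β} (hl : l.length = l'.length) :
    IsPartialIso A B (l.zip l') ↔
      (∀ i j, l.get i = l.get j ↔ l'.get (Fin.cast hl i) = l'.get (Fin.cast hl j)) ∧
      ∀ (r : V.Rel) (v : Fin (V.ar r) → Fin l.length),
        A.rel r (fun t => l.get (v t)) ↔ B.rel r fun t => l'.get (Fin.cast hl (v t)) := by
  have hzip : (l.zip l').length = l.length := by simp [hl]
  constructor
  · rintro ⟨heq, hrel⟩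
    refine ⟨fun i j => ?_, fun r v => ?_⟩
    · simpa using heq (Fin.cast hzip.symm i) (Fin.cast hzip.symm j)
    · simpa using hrel r fun t => Fin.cast hzip.symm (v t)
  · rintro ⟨heq, hrel⟩
    refine ⟨fun i j => ?_, fun r v => ?_⟩
    · simpa using heq (Fin.cast hzip i) (Fin.cast hzip j)
    · simpa using hrel r fun t => Fin.cast hzip (v t)

end PartialIso

/-- Strategies of Duplicator in the `k`-round game, encoded as maps from the sequence of Spoiler's
moves to the sequence of Duplicator's responses: prefix preservation says that each response depends
only on the moves made so far. The values of `s` on sequences longer than `k` are irrelevant. -/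
structure IsStrategy {α β : Type} (k : ℕ) (s : List α → List β) : Prop where
  length_eq : ∀ l, l.length ≤ k → (s l).length = l.length
  map_isPrefix : ∀ l l', l <+: l' → l'.length ≤ k → s l <+: s l'

/-- The strategy answering Spoiler's first move `a` with `b a` and continuing with `s a`. -/
def consStrategy {α β : Type} (b : α → β) (s : α → List α → List β) : List α → List β
  | [] => []
  | a :: l => b a :: s a l

namespace IsStrategy

variable {α β : Type} {k n : ℕ}

theorem consStrategy {b : α → β} {s : α → List α → List β} (hs : ∀ a, IsStrategy n (s a)) :
    IsStrategy (n + 1) (consStrategy b s) where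
  length_eq
    | [], _ => rfl
    | a :: l, hl => congrArg (· + 1) ((hs a).length_eq l (Nat.le_of_succ_le_succ hl))
  map_isPrefix
    | [], _, _, _ => List.nil_prefix
    | _ :: _, [], h, _ => absurd (List.prefix_nil.1 h) (List.cons_ne_nil _ _)
    | a :: l, a' :: l', h, hl => by
      obtain ⟨rfl, hprefix⟩ := List.cons_prefix_cons.1 h
      exact List.cons_prefix_cons.2
        ⟨rfl, (hs a).map_isPrefix l l' hprefix (Nat.le_of_succ_le_succ hl)⟩

variable {s : List α → List β}

theorem exists_eq_cons (hs : IsStrategy (n + 1) s) (a : α) :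
    ∃ b s', IsStrategy n s' ∧ ∀ l, l.length ≤ n → s (a :: l) = b :: s' l := by
  obtain ⟨b, hb⟩ := List.length_eq_one_iff.1 (hs.length_eq [a] (by simp))
  have hcons (l : List α) (hl : l.length ≤ n) : s (a :: l) = b :: (s (a :: l)).tail := by
    obtain ⟨t, ht⟩ := hs.map_isPrefix [a] (a :: l) (by simp) (Nat.succ_le_succ hl)
    simp [← ht, hb]
  refine ⟨b, fun l => (s (a :: l)).tail, ⟨fun l hl => ?_, fun l l' h hl => ?_⟩, hcons⟩
  · simp [hs.length_eq (a :: l) (Nat.succ_le_succ hl)]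
  · have hprefix : s (a :: l) <+: s (a :: l') :=
      hs.map_isPrefix _ _ ((List.prefix_cons_inj a).2 h) (Nat.succ_le_succ hl)
    rw [hcons l (h.length_le.trans hl), hcons l' hl] at hprefix
    exact (List.prefix_cons_inj b).1 hprefix

theorem zip_isPrefix_zip (hs : IsStrategy k s) {l l' : List α} (h : l <+: l')
    (hl : l'.length ≤ k) : l.zip (s l) <+: l'.zip (s l') := by
  have hlen := hs.length_eq l (h.length_le.trans hl)
  obtain ⟨u, hu⟩ := hs.map_isPrefix l l' h hl
  obtain ⟨t, rfl⟩ := h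
  rw [← hu, List.zip_append hlen.symm]
  exact List.prefix_append _ _

end IsStrategy

section Game

variable {V : Vocab} {α β : Type} {A : Str V α} {B : Str V β} {k : ℕ}

theorem efWin_iff_exists_isStrategy (n : ℕ) (h : List (α × β)) :
    EFWin A B n h ↔ ∃ s : List α → List β, IsStrategy n s ∧
      ∀ l : List α, l.length = n → IsPartialIso A B (h ++ l.zip (s l)) := by
  induction n generalizing h with
  | zero =>
    constructor
    · exact fun H => ⟨fun _ => [], ⟨fun l hl => by simp_all, fun _ _ _ _ => List.prefix_rfl⟩,
        fun l _ => by simpa [EFWin] using H⟩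
    · rintro ⟨s, -, hwin⟩
      simpa [EFWin] using hwin [] rfl
  | succ n ih =>
    constructor
    · intro H
      choose b hb using H
      choose s hs hwin using fun a => (ih _).1 (hb a)
      refine ⟨consStrategy b s, .consStrategy hs, ?_⟩
      rintro (_ | ⟨a, l⟩) hl
      · simp at hl
      · simpa [consStrategy] using hwin a l (Nat.succ_injective hl)
    · rintro ⟨s, hs, hwin⟩ a
      obtain ⟨b, s', hs', hcons⟩ := hs.exists_eq_cons a
      refine ⟨b, (ih _).2 ⟨s', hs', fun l hl => ?_⟩⟩
      simpa [hcons l hl.le] using hwin (a :: l) (by simp [hl])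

theorem IsStrategy.isPartialIso_of_length_le (hA : Nonempty α ∨ ∀ r : V.Rel, V.ar r ≠ 0)
    {s : List α → List β} (hs : IsStrategy k s)
    (hwin : ∀ l : List α, l.length = k → IsPartialIso A B (l.zip (s l))) (l : List α)
    (hl : l.length ≤ k) : IsPartialIso A B (l.zip (s l)) := by
  rcases isEmpty_or_nonempty α with hα | ⟨⟨a⟩⟩
  · rw [Subsingleton.elim l [], List.zip_nil_left]
    exact isPartialIso_nil (hA.resolve_left (not_nonempty_iff.2 hα))
  · have hlen : (l ++ List.replicate (k - l.length) a).length = k := by simp [hl]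
    exact (hwin _ hlen).of_isPrefix (hs.zip_isPrefix_zip (List.prefix_append _ _) hlen.le)

theorem efWin_nil_iff_exists_isStrategy (hA : Nonempty α ∨ ∀ r : V.Rel, V.ar r ≠ 0) :
    EFWin A B k [] ↔ ∃ s : List α → List β, IsStrategy k s ∧
      ∀ l : List α, l.length ≤ k → IsPartialIso A B (l.zip (s l)) := by
  refine (efWin_iff_exists_isStrategy k []).trans (exists_congr fun s => and_congr_right ?_)
  exact fun hs => ⟨hs.isPartialIso_of_length_le hA, fun hwin l hl => hwin l hl.le⟩

end Game

namespace FE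

variable {V : Vocab} {α β : Type} {A : Str V α} {B : Str V β} {k : ℕ}

theorem isCoalg : EObj.IsCoalg k (FE V k A) := by
  refine ⟨fun x => List.prefix_rfl, fun x y z => List.IsPrefix.trans,
    fun x y hxy hyx => Subtype.ext (hxy.eq_of_length_le hyx.length_le), fun x => ?_, ?_⟩
  · have htotal (y z : (FE V k A).carrier) (hy : y.1 <+: x.1) (hz : z.1 <+: x.1) :
        y.1 <+: z.1 ∨ z.1 <+: y.1 := List.prefix_or_prefix_of_prefix hy hz
    have hinj : Set.InjOn (fun y => y.1.length) {y | (FE V k A).le y x} := fun y hy z hz h =>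
      Subtype.ext <| (htotal y z hy hz).elim (·.eq_of_length h) fun hzy =>
        (hzy.eq_of_length h.symm).symm
    have hmaps : Set.MapsTo (fun y => y.1.length) {y | (FE V k A).le y x}
        (Finset.range (k + 1)) := fun y _ => by simpa using Nat.lt_succ_of_le y.2.2
    refine ⟨.of_injOn hmaps hinj (Finset.finite_toSet _), ?_, htotal⟩
    simpa using Set.ncard_le_ncard_of_injOn _ hmaps hinj (Finset.finite_toSet _)
  · rintro x y ⟨-, ⟨r, v, hv, ⟨i, rfl⟩, ⟨j, rfl⟩⟩ | hxy | hyx⟩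
    · exact hv.1 i j
    · exact hxy.1
    · exact hyx.1.symm

variable (A) in
/-- The sequence of the first `i + 1` elements of `l`, as an element of `F_k^I(A)`. The index runs
over positions of `l`, so that this is the prefix whose last element is `l.get i`. -/
def prefixAt (l : List α) (hl : l.length ≤ k) (i : Fin l.length) : (FE V k A).carrier :=
  ⟨l.take (i + 1), by
    have := i.2
    rw [← List.length_pos_iff, List.length_take]
    omega, (List.length_take_le' _ _).trans hl⟩

section PrefixAt

variable {l : List α} {hl : l.length ≤ k}

theorem length_prefixAt (i : Fin l.length) : (prefixAt A l hl i).1.length = i + 1 :=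
  List.length_take_of_le i.2

theorem getLast_prefixAt (i : Fin l.length) :
    (prefixAt A l hl i).1.getLast (prefixAt A l hl i).2.1 = l.get i := by
  simp [prefixAt, List.getLast_eq_getElem]

theorem symmGen_prefixAt (i j : Fin l.length) :
    SymmGen (FE V k A).le (prefixAt A l hl i) (prefixAt A l hl j) :=
  List.prefix_or_prefix_of_prefix (List.take_prefix _ _) (List.take_prefix _ _)

theorem rel_prefixAt_iff (r : V.Rel) (v : Fin (V.ar r) → Fin l.length) :
    ((FE V k A).rel r fun t => prefixAt A l hl (v t)) ↔ A.rel r fun t => l.get (v t) := by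
  simp only [← getLast_prefixAt (A := A) (hl := hl)]
  exact and_iff_right fun _ _ => symmGen_prefixAt _ _

theorem ieq_prefixAt_iff (i j : Fin l.length) :
    (FE V k A).ieq (prefixAt A l hl i) (prefixAt A l hl j) ↔ l.get i = l.get j := by
  simp only [← getLast_prefixAt (A := A) (hl := hl)]
  exact and_iff_right (symmGen_prefixAt _ _)

theorem exists_eq_prefixAt {x : (FE V k A).carrier} (hx : x.1 <+: l) :
    ∃ i, x = prefixAt A l hl i := by
  have hpos := List.length_pos_iff.2 x.2.1
  refine ⟨⟨x.1.length - 1, by have := hx.length_le; omega⟩, Subtype.ext ?_⟩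
  simpa [prefixAt, Nat.sub_add_cancel hpos] using List.prefix_iff_eq_take.1 hx

end PrefixAt

theorem exists_eq_prefixAt_of_chain {ι : Type} [Finite ι] {v : ι → (FE V k A).carrier}
    (hv : ∀ i j, SymmGen (FE V k A).le (v i) (v j)) :
    ∃ (l : List α) (hl : l.length ≤ k) (w : ι → Fin l.length),
      v = fun i => prefixAt A l hl (w i) := by
  obtain ⟨l, hl, hle⟩ : ∃ l : List α, l.length ≤ k ∧ ∀ i, (v i).1 <+: l := by
    rcases isEmpty_or_nonempty ι with hι | hι
    · exact ⟨[], Nat.zero_le k, hι.elim⟩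
    · obtain ⟨j, hj⟩ := Finite.exists_max fun i => (v i).1.length
      refine ⟨(v j).1, (v j).2.2, fun i => ?_⟩
      exact (hv i j).elim id fun hji => (hji.eq_of_length_le (hj i)) ▸ List.prefix_rfl
  choose w hw using fun i => exists_eq_prefixAt (hl := hl) (hle i)
  exact ⟨l, hl, w, funext hw⟩

theorem cover_iff {x y : (FE V k A).carrier} :
    (FE V k A).Cover x y ↔ x.1 <+: y.1 ∧ y.1.length = x.1.length + 1 := by
  constructor
  · rintro ⟨hle, hne, hbetween⟩
    have hlt : x.1.length < y.1.length :=
      lt_of_not_ge fun hge => hne (Subtype.ext (hle.eq_of_length_le hge))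
    let z := prefixAt A y.1 y.2.2 ⟨x.1.length, hlt⟩
    have hz : z.1.length = x.1.length + 1 := length_prefixAt _
    have hxz : x.1 <+: z.1 := List.prefix_take_iff.2 ⟨hle, Nat.le_succ _⟩
    refine ⟨hle, ?_⟩
    rcases hbetween z hxz (List.take_prefix _ _) with hzx | hzy
    · rw [hzx] at hz
      omega
    · rw [← hzy, hz]
  · rintro ⟨hle, hlen⟩
    refine ⟨hle, fun h => by simp [h] at hlen, fun z hxz hzy => ?_⟩
    rcases Nat.lt_or_ge x.1.length z.1.length with hlt | hge
    · exact .inr (Subtype.ext (hzy.eq_of_length_le (by omega)))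
    · exact .inl (Subtype.ext (hxz.eq_of_length_le hge)).symm

theorem isRoot_iff {x : (FE V k A).carrier} : (FE V k A).IsRoot x ↔ x.1.length = 1 := by
  constructor
  · intro hx
    rw [← hx (prefixAt A x.1 x.2.2 ⟨0, List.length_pos_iff.2 x.2.1⟩) (List.take_prefix _ _)]
    exact length_prefixAt _
  · intro hx y hyx
    exact Subtype.ext (hyx.eq_of_length_le (hx.trans_le (List.length_pos_iff.2 y.2.1)))

theorem length_map_of_isForestHom {f : (FE V k A).carrier → (FE V k B).carrier}
    (hf : EObj.IsForestHom (FE V k A) (FE V k B) f) (x : (FE V k A).carrier) :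
    (f x).1.length = x.1.length := by
  obtain ⟨l, hne, hl⟩ := x
  induction l using List.reverseRecOn with
  | nil => exact absurd rfl hne
  | append_singleton l a ih =>
    rcases eq_or_ne l [] with rfl | hl_ne
    · exact isRoot_iff.1 (hf.map_isRoot _ (isRoot_iff.2 rfl))
    · have hl_le : l.length ≤ k := (List.prefix_append l [a]).length_le.trans hl
      have hcover := hf.map_cover ⟨l, hl_ne, hl_le⟩ ⟨l ++ [a], hne, hl⟩
        (cover_iff.2 ⟨List.prefix_append _ _, by simp⟩)
      rw [(cover_iff.1 hcover).2, ih hl_ne hl_le, List.length_append, List.length_singleton]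

end FE

namespace IsStrategy

variable {V : Vocab} {α β : Type} {k : ℕ} {s : List α → List β}

/-- The map `F_k^I(A) → F_k^I(B)` given by a strategy of Duplicator. -/
def mapFE (hs : IsStrategy k s) (A : Str V α) (B : Str V β) (x : (FE V k A).carrier) :
    (FE V k B).carrier :=
  have hlen : (s x.1).length = x.1.length := hs.length_eq x.1 x.2.2
  ⟨s x.1, fun h => x.2.1 (List.length_eq_zero_iff.1 (by rw [← hlen, h, List.length_nil])),
    hlen.trans_le x.2.2⟩

variable {A : Str V α} {B : Str V β}

theorem isForestHom_mapFE (hs : IsStrategy k s) :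
    EObj.IsForestHom (FE V k A) (FE V k B) (hs.mapFE A B) where
  map_isRoot x hx := FE.isRoot_iff.2 ((hs.length_eq x.1 x.2.2).trans (FE.isRoot_iff.1 hx))
  map_cover x y hxy := by
    obtain ⟨hle, hlen⟩ := FE.cover_iff.1 hxy
    refine FE.cover_iff.2 ⟨hs.map_isPrefix _ _ hle y.2.2, ?_⟩
    simp only [mapFE, hs.length_eq _ x.2.2, hs.length_eq _ y.2.2, hlen]

theorem mapFE_prefixAt (hs : IsStrategy k s) {l : List α} (hl : l.length ≤ k)
    (i : Fin l.length) :
    hs.mapFE A B (FE.prefixAt A l hl i) =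
      FE.prefixAt B (s l) ((hs.length_eq l hl).trans_le hl)
        (Fin.cast (hs.length_eq l hl).symm i) := by
  have hlen := (hs.length_eq _ (FE.prefixAt A l hl i).2.2).trans (FE.length_prefixAt i)
  refine Subtype.ext ((List.prefix_iff_eq_take.1 ?_).trans (congrArg (s l).take hlen))
  exact hs.map_isPrefix _ _ (List.take_prefix _ _) hl

theorem isChainwiseEmb_mapFE_iff (hs : IsStrategy k s) :
    EObj.IsChainwiseEmb (FE V k A) (FE V k B) (hs.mapFE A B) ↔
      ∀ l : List α, l.length ≤ k → IsPartialIso A B (l.zip (s l)) := by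
  constructor
  · intro hemb l hl
    refine (isPartialIso_zip_iff (hs.length_eq l hl).symm).2 ⟨fun i j => ?_, fun r v => ?_⟩
    · simpa only [mapFE_prefixAt, FE.ieq_prefixAt_iff] using
        hemb.ieq_iff _ _ (FE.symmGen_prefixAt (hl := hl) i j)
    · simpa only [mapFE_prefixAt, FE.rel_prefixAt_iff] using
        hemb.rel_iff r _ fun t u => FE.symmGen_prefixAt (hl := hl) (v t) (v u)
  · intro hiso
    refine ⟨fun r v hv => ?_, fun x y hxy => ?_⟩
    · obtain ⟨l, hl, w, rfl⟩ := FE.exists_eq_prefixAt_of_chain hv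
      simpa only [mapFE_prefixAt, FE.rel_prefixAt_iff] using
        ((isPartialIso_zip_iff (hs.length_eq l hl).symm).1 (hiso l hl)).2 r w
    · obtain ⟨l, hl, hxl, hyl⟩ : ∃ l : List α, l.length ≤ k ∧ x.1 <+: l ∧ y.1 <+: l :=
        hxy.elim (⟨y.1, y.2.2, ·, List.prefix_rfl⟩) (⟨x.1, x.2.2, List.prefix_rfl, ·⟩)
      obtain ⟨i, rfl⟩ := FE.exists_eq_prefixAt (hl := hl) hxl
      obtain ⟨j, rfl⟩ := FE.exists_eq_prefixAt (hl := hl) hyl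
      simpa only [mapFE_prefixAt, FE.ieq_prefixAt_iff] using
        ((isPartialIso_zip_iff (hs.length_eq l hl).symm).1 (hiso l hl)).1 i j

theorem isPWEmb_mapFE_iff (hs : IsStrategy k s) :
    EObj.IsPWEmb k (FE V k A) (FE V k B) (hs.mapFE A B) ↔
      ∀ l : List α, l.length ≤ k → IsPartialIso A B (l.zip (s l)) := by
  rw [EObj.isPWEmb_iff FE.isCoalg FE.isCoalg, and_iff_right hs.isForestHom_mapFE,
    isChainwiseEmb_mapFE_iff]

end IsStrategy

theorem EObj.IsForestHom.exists_isStrategy_mapFE_eq {V : Vocab} {α β : Type} {A : Str V α}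
    {B : Str V β} {k : ℕ} {f : (FE V k A).carrier → (FE V k B).carrier}
    (hf : IsForestHom (FE V k A) (FE V k B) f) :
    ∃ (s : List α → List β) (hs : IsStrategy k s), hs.mapFE A B = f := by
  classical
  let s (l : List α) : List β := if h : l ≠ [] ∧ l.length ≤ k then (f ⟨l, h⟩).1 else []
  have hs_nil : s [] = [] := dif_neg (by simp)
  have hs_apply (x : (FE V k A).carrier) : s x.1 = (f x).1 := dif_pos x.2
  have hs : IsStrategy k s := by
    refine ⟨fun l hl => ?_, fun l l' h hl' => ?_⟩
    · rcases eq_or_ne l [] with rfl | hne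
      · rw [hs_nil, List.length_nil, List.length_nil]
      · exact (congrArg List.length (hs_apply ⟨l, hne, hl⟩)).trans
          (FE.length_map_of_isForestHom hf _)
    · rcases eq_or_ne l [] with rfl | hne
      · exact hs_nil ▸ List.nil_prefix
      · have hne' : l' ≠ [] := h.ne_nil hne
        rw [hs_apply ⟨l, hne, h.length_le.trans hl'⟩, hs_apply ⟨l', hne', hl'⟩]
        exact hf.map_le FE.isCoalg FE.isCoalg h
  exact ⟨s, hs, funext fun x => Subtype.ext (hs_apply x)⟩

theorem pathwise_embedding_iff_existential_EF_game_general
    {V : Vocab} {α β : Type} (A : Str V α) (B : Str V β) (k : ℕ)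
    (hA : Nonempty α ∨ ∀ r : V.Rel, V.ar r ≠ 0) :
    (∃ f, EObj.IsPWEmb k (FE V k A) (FE V k B) f) ↔ EFWin A B k [] := by
  rw [efWin_nil_iff_exists_isStrategy hA]
  constructor
  · rintro ⟨f, hf⟩
    obtain ⟨s, hs, rfl⟩ := hf.1.isForestHom.exists_isStrategy_mapFE_eq
    exact ⟨s, hs, hs.isPWEmb_mapFE_iff.1 hf⟩
  · rintro ⟨s, hs, hwin⟩
    exact ⟨hs.mapFE A B, hs.isPWEmb_mapFE_iff.2 hwin⟩

/-- there exists a pathwise embedding `F_k^I(A) → F_k^I(B)` in `EM(E_k^I)`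
if, and only if, Duplicator has a winning strategy in the `k`-round existential
Ehrenfeucht–Fraïssé game from `A` to `B`. -/
theorem pathwise_embedding_iff_existential_EF_game
    (V : Vocab) [Finite V.Rel] (har : ∀ r : V.Rel, V.ar r ≠ 0)
    {α β : Type} (A : Str V α) (B : Str V β) (k : ℕ) :
    (∃ f, EObj.IsPWEmb k (FE V k A) (FE V k B) f) ↔ EFWin A B k [] :=
  pathwise_embedding_iff_existential_EF_game_general A B k (.inr har)
end

section
/- For all σ-structures A and B and every positive integer k, the following are equivalent: (i) every sentence of ∃L^k that is true in A is true in B; (ii) Duplicator has a winning strategy in the existential k-pebble game from A to B. -/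
/-- Existential formulas of the `k`-variable fragment `L^k` of the infinitary logic
`L_{∞,ω}(σ)`: formulas using only the variables `x_1, …, x_k`, with set-sized
conjunctions and disjunctions, no universal quantifiers, and negations only on atomic
formulas. -/
inductive LFml (V : Vocab) (k : ℕ) : Type 1
  | rel (r : V.Rel) (v : Fin (V.ar r) → Fin k) : LFml V k
  | nrel (r : V.Rel) (v : Fin (V.ar r) → Fin k) : LFml V k
  | eq (i j : Fin k) : LFml V k
  | ne (i j : Fin k) : LFml V k
  | iand (ι : Type) (f : ι → LFml V k) : LFml V k
  | ior (ι : Type) (f : ι → LFml V k) : LFml V k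
  | ex (i : Fin k) (φ : LFml V k) : LFml V k

namespace LFml

/-- Free variables. -/
def freeVars {V : Vocab} {k : ℕ} : LFml V k → Set (Fin k)
  | .rel _ v => Set.range v
  | .nrel _ v => Set.range v
  | .eq i j => {i, j}
  | .ne i j => {i, j}
  | .iand _ f => ⋃ x, freeVars (f x)
  | .ior _ f => ⋃ x, freeVars (f x)
  | .ex i φ => freeVars φ \ {i}

/-- Satisfaction, relative to a partial environment (so that sentences have a
well-defined truth value in every, possibly empty, structure). -/
def Sat {V : Vocab} {k : ℕ} {α : Type} (M : Str V α) :
    LFml V k → (Fin k → Option α) → Prop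
  | .rel r v, e => ∃ g : Fin (V.ar r) → α, (∀ i, e (v i) = some (g i)) ∧ M.rel r g
  | .nrel r v, e => ∃ g : Fin (V.ar r) → α, (∀ i, e (v i) = some (g i)) ∧ ¬ M.rel r g
  | .eq i j, e => ∃ x : α, e i = some x ∧ e j = some x
  | .ne i j, e => ∃ x y : α, e i = some x ∧ e j = some y ∧ x ≠ y
  | .iand _ f, e => ∀ x, Sat M (f x) e
  | .ior _ f, e => ∃ x, Sat M (f x) e
  | .ex i φ, e => ∃ a : α, Sat M φ (Function.update e i (some a))

end LFml
/-- The relation determined by the current placings `ρ` of the `k` pairs of pebbles is a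
partial isomorphism between `A` and `B`. -/
def PebblesIso {V : Vocab} {α β : Type} (A : Str V α) (B : Str V β) {k : ℕ}
    (ρ : Fin k → Option (α × β)) : Prop :=
  (∀ (p q : Fin k) (x x' : α) (y y' : β),
    ρ p = some (x, y) → ρ q = some (x', y') → (x = x' ↔ y = y')) ∧
  (∀ (r : V.Rel) (v : Fin (V.ar r) → Fin k) (g : Fin (V.ar r) → α × β),
    (∀ t, ρ (v t) = some (g t)) →
      (A.rel r (fun t => (g t).1) ↔ B.rel r fun t => (g t).2))

/-- Duplicator has a winning strategy in the existential `k`-pebble game from `A` to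
`B`: in each round Spoiler places (or relocates) a pebble on an element of `A` and
Duplicator places the corresponding pebble on an element of `B`; Duplicator wins a round
if the current pebble placings form a partial isomorphism, and wins the game if they can
keep winning after `n` rounds for every `n`.  This is rendered by the existence of a
winning invariant (a non-empty family of safe positions closed under Spoiler's moves). -/
def EPebWin (V : Vocab) {α β : Type} (A : Str V α) (B : Str V β) (k : ℕ) : Prop :=
  ∃ S : (Fin k → Option (α × β)) → Prop,
    S (fun _ => none) ∧
    ∀ ρ, S ρ → PebblesIso A B ρ ∧
      ∀ (p : Fin k) (a : α), ∃ b : β, S (Function.update ρ p (some (a, b)))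

/-!
The positions at which every `∃L^k`-formula passes from `A` to `B` form the largest winning
invariant for Duplicator. Being a partial isomorphism amounts to transferring the literals, and
existential quantification is exactly what Duplicator's answers handle, so on any invariant all
formulas transfer. Conversely, suppose that no answer `b` to Spoiler's move of pebble `p` to `a`
preserves `∃L^k`, and choose for each `b` a formula `ψ b` that fails to transfer; then
`∃ x_p, ⋀ b, ψ b` already failed to transfer before the move.
-/

section TransferOfFormulas

variable {V : Vocab} {α β γ : Type} {k : ℕ}

namespace LFml

section Literals

variable (M : Str V α) (f : γ → α) (ρ : Fin k → Option γ)

theorem sat_rel_map_comp_iff (r : V.Rel) (v : Fin (V.ar r) → Fin k) :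
    (rel r v).Sat M (Option.map f ∘ ρ) ↔
      ∃ g : Fin (V.ar r) → γ, (∀ t, ρ (v t) = some (g t)) ∧ M.rel r (f ∘ g) := by
  constructor
  · rintro ⟨_, hg, hr⟩
    choose g hρ hfg using fun t => Option.map_eq_some_iff.1 (hg t)
    obtain rfl := funext hfg
    exact ⟨g, hρ, hr⟩
  · rintro ⟨g, hρ, hr⟩
    exact ⟨f ∘ g, fun t => Option.map_eq_some_iff.2 ⟨g t, hρ t, rfl⟩, hr⟩

theorem sat_nrel_map_comp_iff (r : V.Rel) (v : Fin (V.ar r) → Fin k) :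
    (nrel r v).Sat M (Option.map f ∘ ρ) ↔
      ∃ g : Fin (V.ar r) → γ, (∀ t, ρ (v t) = some (g t)) ∧ ¬ M.rel r (f ∘ g) :=
  sat_rel_map_comp_iff ⟨fun r g => ¬ M.rel r g⟩ f ρ r v

theorem sat_eq_map_comp_iff (i j : Fin k) :
    (eq i j : LFml V k).Sat M (Option.map f ∘ ρ) ↔
      ∃ c d, ρ i = some c ∧ ρ j = some d ∧ f c = f d := by
  simp only [Sat, Function.comp_apply, Option.map_eq_some_iff]
  constructor
  · rintro ⟨_, ⟨c, hc, rfl⟩, d, hd, hcd⟩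
    exact ⟨c, d, hc, hd, hcd.symm⟩
  · rintro ⟨c, d, hc, hd, hcd⟩
    exact ⟨f c, ⟨c, hc, rfl⟩, d, hd, hcd.symm⟩

theorem sat_ne_map_comp_iff (i j : Fin k) :
    (ne i j : LFml V k).Sat M (Option.map f ∘ ρ) ↔
      ∃ c d, ρ i = some c ∧ ρ j = some d ∧ f c ≠ f d := by
  simp only [Sat, Function.comp_apply, Option.map_eq_some_iff]
  constructor
  · rintro ⟨_, _, ⟨c, hc, rfl⟩, ⟨d, hd, rfl⟩, hcd⟩
    exact ⟨c, d, hc, hd, hcd⟩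
  · rintro ⟨c, d, hc, hd, hcd⟩
    exact ⟨f c, f d, ⟨c, hc, rfl⟩, ⟨d, hd, rfl⟩, hcd⟩

end Literals

/-- The literals of `L^k`: atomic formulas and their negations. -/
inductive IsLiteral : LFml V k → Prop
  | rel (r : V.Rel) (v : Fin (V.ar r) → Fin k) : IsLiteral (.rel r v)
  | nrel (r : V.Rel) (v : Fin (V.ar r) → Fin k) : IsLiteral (.nrel r v)
  | eq (i j : Fin k) : IsLiteral (.eq i j)
  | ne (i j : Fin k) : IsLiteral (.ne i j)

theorem IsLiteral.ne_none_of_mem_freeVars {M : Str V α} {φ : LFml V k} {e : Fin k → Option α}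
    (hφ : φ.IsLiteral) (hsat : φ.Sat M e) : ∀ i ∈ φ.freeVars, e i ≠ none := by
  cases hφ with
  | rel r v | nrel r v =>
    obtain ⟨g, hg, -⟩ := hsat
    rintro _ ⟨t, rfl⟩
    simp [hg t]
  | eq i j =>
    obtain ⟨x, hi, hj⟩ := hsat
    rintro _ (rfl | rfl) <;> simp [*]
  | ne i j =>
    obtain ⟨x, y, hi, hj, -⟩ := hsat
    rintro _ (rfl | rfl) <;> simp [*]

/-- The truth of `φ` passes from `A` to `B` at the position `ρ`, where the variable `x_i` denotes
the element under the `i`-th pebble of the respective structure. -/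
def TransfersAt (φ : LFml V k) (A : Str V α) (B : Str V β) (ρ : Fin k → Option (α × β)) : Prop :=
  φ.Sat A (Option.map Prod.fst ∘ ρ) → φ.Sat B (Option.map Prod.snd ∘ ρ)

end LFml

open LFml

variable {A : Str V α} {B : Str V β} {ρ : Fin k → Option (α × β)}

theorem PebblesIso.transfersAt (hρ : PebblesIso A B ρ) {φ : LFml V k} (hφ : φ.IsLiteral) :
    φ.TransfersAt A B ρ := by
  cases hφ with
  | rel r v =>
    rw [TransfersAt, sat_rel_map_comp_iff, sat_rel_map_comp_iff]
    exact fun ⟨g, hg, hr⟩ => ⟨g, hg, (hρ.2 r v g hg).1 hr⟩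
  | nrel r v =>
    rw [TransfersAt, sat_nrel_map_comp_iff, sat_nrel_map_comp_iff]
    exact fun ⟨g, hg, hr⟩ => ⟨g, hg, mt (hρ.2 r v g hg).2 hr⟩
  | eq i j =>
    rw [TransfersAt, sat_eq_map_comp_iff, sat_eq_map_comp_iff]
    exact fun ⟨c, d, hc, hd, h⟩ => ⟨c, d, hc, hd, (hρ.1 i j _ _ _ _ hc hd).1 h⟩
  | ne i j =>
    rw [TransfersAt, sat_ne_map_comp_iff, sat_ne_map_comp_iff]
    exact fun ⟨c, d, hc, hd, h⟩ => ⟨c, d, hc, hd, mt (hρ.1 i j _ _ _ _ hc hd).2 h⟩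

theorem pebblesIso_of_forall_isLiteral_transfersAt
    (h : ∀ φ : LFml V k, φ.IsLiteral → φ.TransfersAt A B ρ) : PebblesIso A B ρ := by
  refine ⟨fun p q x x' y y' hp hq => ⟨fun hx => ?_, fun hy => ?_⟩,
    fun r v g hg => ⟨fun hA => ?_, fun hB => ?_⟩⟩
  · have heq := h _ (.eq p q)
    rw [TransfersAt, sat_eq_map_comp_iff, sat_eq_map_comp_iff] at heq
    obtain ⟨c, d, hc, hd, hcd⟩ := heq ⟨_, _, hp, hq, hx⟩
    obtain rfl := Option.some.inj (hp.symm.trans hc)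
    obtain rfl := Option.some.inj (hq.symm.trans hd)
    exact hcd
  · have hne := h _ (.ne p q)
    rw [TransfersAt, sat_ne_map_comp_iff, sat_ne_map_comp_iff] at hne
    by_contra hx
    obtain ⟨c, d, hc, hd, hcd⟩ := hne ⟨_, _, hp, hq, hx⟩
    obtain rfl := Option.some.inj (hp.symm.trans hc)
    obtain rfl := Option.some.inj (hq.symm.trans hd)
    exact hcd hy
  · have hrel := h _ (.rel r v)
    rw [TransfersAt, sat_rel_map_comp_iff, sat_rel_map_comp_iff] at hrel
    obtain ⟨g', hg', hB⟩ := hrel ⟨g, hg, hA⟩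
    obtain rfl : g = g' := funext fun t => Option.some.inj ((hg t).symm.trans (hg' t))
    exact hB
  · have hnrel := h _ (.nrel r v)
    rw [TransfersAt, sat_nrel_map_comp_iff, sat_nrel_map_comp_iff] at hnrel
    by_contra hA
    obtain ⟨g', hg', hB'⟩ := hnrel ⟨g, hg, hA⟩
    obtain rfl : g = g' := funext fun t => Option.some.inj ((hg t).symm.trans (hg' t))
    exact hB' hB

/-- A family `S` of positions of the existential `k`-pebble game that witnesses a winning strategy
for Duplicator from each of its members: they are partial isomorphisms, and Duplicator can answer
every move of Spoiler without leaving `S`. -/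
def IsWinningInvariant (A : Str V α) (B : Str V β) (S : (Fin k → Option (α × β)) → Prop) : Prop :=
  ∀ ρ, S ρ → PebblesIso A B ρ ∧ ∀ p a, ∃ b, S (Function.update ρ p (some (a, b)))

theorem IsWinningInvariant.transfersAt {S : (Fin k → Option (α × β)) → Prop}
    (hS : IsWinningInvariant A B S) (φ : LFml V k) : ∀ ρ, S ρ → φ.TransfersAt A B ρ := by
  induction φ with
  | rel r v => exact fun ρ hρ => (hS ρ hρ).1.transfersAt (.rel r v)
  | nrel r v => exact fun ρ hρ => (hS ρ hρ).1.transfersAt (.nrel r v)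
  | eq i j => exact fun ρ hρ => (hS ρ hρ).1.transfersAt (.eq i j)
  | ne i j => exact fun ρ hρ => (hS ρ hρ).1.transfersAt (.ne i j)
  | iand ι ψ ih => exact fun ρ hρ hA x => ih x ρ hρ (hA x)
  | ior ι ψ ih => exact fun ρ hρ ⟨x, hA⟩ => ⟨x, ih x ρ hρ hA⟩
  | ex i ψ ih =>
    rintro ρ hρ ⟨a, hA⟩
    obtain ⟨b, hb⟩ := (hS ρ hρ).2 i a
    have hψ := ih _ hb
    rw [TransfersAt, Function.comp_update, Function.comp_update] at hψ
    exact ⟨b, hψ hA⟩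

/-- Every formula of `∃L^k` whose free variables all correspond to placed pebbles passes from `A`
to `B` at the position `ρ`. -/
def PreservesExistential (A : Str V α) (B : Str V β) (ρ : Fin k → Option (α × β)) : Prop :=
  ∀ φ : LFml V k, (∀ i ∈ φ.freeVars, ρ i ≠ none) → φ.TransfersAt A B ρ

namespace PreservesExistential

theorem pebblesIso (hρ : PreservesExistential A B ρ) : PebblesIso A B ρ := by
  refine pebblesIso_of_forall_isLiteral_transfersAt fun φ hφ hA => hρ φ (fun i hi => ?_) hA
  exact mt Option.map_eq_none_iff.2 (hφ.ne_none_of_mem_freeVars hA i hi)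

theorem exists_update (hρ : PreservesExistential A B ρ) (p : Fin k) (a : α) :
    ∃ b, PreservesExistential A B (Function.update ρ p (some (a, b))) := by
  by_contra hfail
  simp only [PreservesExistential, TransfersAt, Function.comp_update] at hfail
  push Not at hfail
  choose ψ hfree hA hB using hfail
  have hfree_ex : ∀ i ∈ (ex p (iand β ψ)).freeVars, ρ i ≠ none := by
    rintro i ⟨hi, hip⟩
    obtain ⟨b, hb⟩ := Set.mem_iUnion.1 hi
    simpa only [Function.update_of_ne hip] using hfree b i hb
  obtain ⟨b, hb⟩ := hρ (ex p (iand β ψ)) hfree_ex ⟨a, hA⟩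
  exact hB b (hb b)

end PreservesExistential

theorem isWinningInvariant_preservesExistential :
    IsWinningInvariant A B (PreservesExistential (k := k) A B) :=
  fun _ hρ => ⟨hρ.pebblesIso, hρ.exists_update⟩

theorem preservesExistential_iff_exists_isWinningInvariant :
    PreservesExistential A B ρ ↔ ∃ S, S ρ ∧ IsWinningInvariant A B S :=
  ⟨fun hρ => ⟨_, hρ, isWinningInvariant_preservesExistential⟩,
    fun ⟨_, hρ, hS⟩ φ _ => hS.transfersAt φ _ hρ⟩

theorem preservesExistential_none_iff :
    PreservesExistential A B (fun _ : Fin k => none) ↔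
      ∀ φ : LFml V k, φ.freeVars = ∅ →
        φ.Sat A (fun _ => none) → φ.Sat B (fun _ => none) := by
  simp only [PreservesExistential, ne_eq, not_true_eq_false, Set.eq_empty_iff_forall_notMem]
  rfl

end TransferOfFormulas

theorem existential_pebble_game_characterisation_general
    (V : Vocab) {α β : Type} (A : Str V α) (B : Str V β) (k : ℕ) :
    (∀ φ : LFml V k, φ.freeVars = ∅ →
        φ.Sat A (fun _ => none) → φ.Sat B (fun _ => none)) ↔
      EPebWin V A B k :=
  preservesExistential_none_iff.symm.trans preservesExistential_iff_exists_isWinningInvariant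

/-- every sentence of `∃L^k` true in `A` is true in `B` if, and only if,
Duplicator has a winning strategy in the existential `k`-pebble game from `A` to `B`. -/
theorem existential_pebble_game_characterisation
    (V : Vocab) [Finite V.Rel] (har : ∀ r : V.Rel, V.ar r ≠ 0)
    {α β : Type} (A : Str V α) (B : Str V β) (k : ℕ) (hk : 0 < k) :
    (∀ φ : LFml V k, φ.freeVars = ∅ →
        φ.Sat A (fun _ => none) → φ.Sat B (fun _ => none)) ↔
      EPebWin V A B k :=
  existential_pebble_game_characterisation_general V A B k
end

section
/- For all σ-structures A and B and every positive integer k, there exists a pathwise embedding F_k^I(A) → F_k^I(B) in EM(P_k^I) if, and only if, Duplicator has a winning strategy in the existential k-pebble game from A to B. -/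
/-- An object datum for the Eilenberg–Moore category `EM(P_k^I)` of the pebbling comonad
over `σ^I = σ ∪ {I}`: a `σ`-structure with an interpretation `ieq` of the fresh binary
relation symbol `I`, a (forest) order and a pebbling function. -/
structure PObj (V : Vocab) (k : ℕ) : Type 1 where
  carrier : Type
  rel : ∀ r : V.Rel, (Fin (V.ar r) → carrier) → Prop
  ieq : carrier → carrier → Prop
  le : carrier → carrier → Prop
  peb : carrier → Fin k

namespace PObj

variable {V : Vocab} {k : ℕ}

/-- Gaifman adjacency, with respect to all relations of `σ ∪ {I}`. -/
def Adj (X : PObj V k) (x y : X.carrier) : Prop :=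
  x ≠ y ∧ ((∃ r v, X.rel r v ∧ (∃ i, v i = x) ∧ (∃ j, v j = y)) ∨ X.ieq x y ∨ X.ieq y x)

/-- The covering relation of the order of `X`. -/
def Cover (X : PObj V k) (x y : X.carrier) : Prop :=
  X.le x y ∧ x ≠ y ∧ ∀ z, X.le x z → X.le z y → z = x ∨ z = y

/-- Roots, i.e. minimal elements of the forest order. -/
def IsRoot (X : PObj V k) (x : X.carrier) : Prop := ∀ y, X.le y x → y = x

/-- `X` is (the datum of) a coalgebra for `P_k^I`: a `k`-pebble forest-ordered
`σ^I`-structure. -/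
def IsCoalg (X : PObj V k) : Prop :=
  (∀ x, X.le x x) ∧ (∀ x y z, X.le x y → X.le y z → X.le x z) ∧
  (∀ x y, X.le x y → X.le y x → x = y) ∧
  (∀ x : X.carrier, {y | X.le y x}.Finite ∧
    ∀ y z, X.le y x → X.le z x → X.le y z ∨ X.le z y) ∧
  (∀ x y, X.Adj x y → X.le x y ∨ X.le y x) ∧
  (∀ x y, X.Adj x y → X.le x y → x ≠ y →
    ∀ z, X.le x z → x ≠ z → X.le z y → X.peb x ≠ X.peb z)

/-- Morphisms of `EM(P_k^I)`: homomorphisms of `σ^I`-structures that are forest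
morphisms and preserve the pebbling functions. -/
def IsHom (X Y : PObj V k) (f : X.carrier → Y.carrier) : Prop :=
  (∀ r v, X.rel r v → Y.rel r fun i => f (v i)) ∧
  (∀ x y, X.ieq x y → Y.ieq (f x) (f y)) ∧
  (∀ x, X.IsRoot x → Y.IsRoot (f x)) ∧
  (∀ x y, X.Cover x y → Y.Cover (f x) (f y)) ∧
  (∀ x, Y.peb (f x) = X.peb x)

/-- Embeddings: morphisms that are injective and reflect all relations. -/
def IsEmb (X Y : PObj V k) (f : X.carrier → Y.carrier) : Prop :=
  IsHom X Y f ∧ Function.Injective f ∧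
  (∀ r v, (Y.rel r fun i => f (v i)) → X.rel r v) ∧
  (∀ x y, Y.ieq (f x) (f y) → X.ieq x y)

/-- Paths: objects whose forest order is finite and linear. -/
def IsPath (X : PObj V k) : Prop :=
  Finite X.carrier ∧ ∀ x y : X.carrier, X.le x y ∨ X.le y x

/-- Pathwise embeddings. -/
def IsPWEmb (X Y : PObj V k) (f : X.carrier → Y.carrier) : Prop :=
  IsHom X Y f ∧ ∀ P : PObj V k, IsCoalg P → IsPath P →
    ∀ m : P.carrier → X.carrier, IsEmb P X m → IsEmb P Y fun p => f (m p)

/-- Open morphisms: every commutative square of path embeddings over `f` admits a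
diagonal filler. -/
def IsOpen (X Y : PObj V k) (f : X.carrier → Y.carrier) : Prop :=
  ∀ P Q : PObj V k, IsCoalg P → IsPath P → IsCoalg Q → IsPath Q →
    ∀ (i : P.carrier → Q.carrier) (m : P.carrier → X.carrier)
      (n : Q.carrier → Y.carrier),
      IsEmb P Q i → IsEmb P X m → IsEmb Q Y n → (∀ x, n (i x) = f (m x)) →
      ∃ d : Q.carrier → X.carrier, IsHom Q X d ∧ (∀ x, d (i x) = m x) ∧ ∀ q, f (d q) = n q

end PObj
/-- The co-free coalgebra `F_k^I(A)` for the pebbling comonad on `J(A)`: finite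
non-empty sequences of moves `(p_i, a_i)`, ordered by the prefix order.  A tuple of
sequences is related iff the sequences are pairwise comparable, the pebble index of the
last move of a prefix does not reappear in the corresponding suffix, and the elements of
the last moves are related in `J(A)`; the fresh relation `I` is interpreted accordingly,
with equality of the elements of the last moves. -/
def FP (V : Vocab) (k : ℕ) {α : Type} (A : Str V α) : PObj V k where
  carrier := {l : List (Fin k × α) // l ≠ []}
  rel r v :=
    (∀ i j, (v i).1 <+: (v j).1 ∨ (v j).1 <+: (v i).1) ∧
    (∀ i j w, (v j).1 = (v i).1 ++ w →
      ∀ m ∈ w, m.1 ≠ ((v i).1.getLast (v i).2).1) ∧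
    A.rel r fun i => ((v i).1.getLast (v i).2).2
  ieq s t :=
    ((s.1 <+: t.1) ∨ (t.1 <+: s.1)) ∧
    (∀ w, t.1 = s.1 ++ w → ∀ m ∈ w, m.1 ≠ (s.1.getLast s.2).1) ∧
    (∀ w, s.1 = t.1 ++ w → ∀ m ∈ w, m.1 ≠ (t.1.getLast t.2).1) ∧
    (s.1.getLast s.2).2 = (t.1.getLast t.2).2
  le s t := s.1 <+: t.1
  peb s := (s.1.getLast s.2).1

/-!
A morphism `F_k^I(A) → F_k^I(B)` is the same thing as a Duplicator strategy: it sends a play of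
Spoiler to the list of Duplicator's answers.  In a play, the initial segments whose last pebble has
not been moved since are exactly the pebbles currently on the board, and a tuple of plays satisfies
the combinatorial side conditions of a relation of `F_k^I(A)` precisely when its members are all on
the board at one moment of a common play.  A morphism is a pathwise embedding iff it reflects the
relations on chains of plays, and with the previous remark this says that all positions reached by
the strategy are partial isomorphisms; the relation `I` takes care of equality.
-/

namespace PObj

variable {V : Vocab} {k : ℕ} {X Y Z : PObj V k}

theorem IsHom.comp {g : Y.carrier → Z.carrier} {f : X.carrier → Y.carrier}
    (hg : IsHom Y Z g) (hf : IsHom X Y f) : IsHom X Z fun x => g (f x) := by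
  obtain ⟨hf_rel, hf_ieq, hf_root, hf_cover, hf_peb⟩ := hf
  obtain ⟨hg_rel, hg_ieq, hg_root, hg_cover, hg_peb⟩ := hg
  exact ⟨fun r v hv => hg_rel r _ (hf_rel r v hv), fun x y hxy => hg_ieq _ _ (hf_ieq x y hxy),
    fun x hx => hg_root _ (hf_root x hx), fun x y hxy => hg_cover _ _ (hf_cover x y hxy),
    fun x => (hg_peb _).trans (hf_peb x)⟩

/-- The forest order of a coalgebra, as a bundled partial order. -/
abbrev IsCoalg.toPartialOrder (hX : X.IsCoalg) : PartialOrder X.carrier where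
  le := X.le
  le_refl := hX.1
  le_trans := hX.2.1
  le_antisymm := hX.2.2.1

theorem IsHom.le_and_ne (hX : X.IsCoalg) (hY : Y.IsCoalg) {f : X.carrier → Y.carrier}
    (hf : IsHom X Y f) {x y : X.carrier} (hxy : X.le x y) (hne : x ≠ y) :
    Y.le (f x) (f y) ∧ f x ≠ f y := by
  let := hX.toPartialOrder
  let := hY.toPartialOrder
  let : LocallyFiniteOrder X.carrier :=
    .ofFiniteIcc fun _ b => (hX.2.2.2.1 b).1.subset fun _ hz => hz.2
  have hmono : StrictMono f := (strictMono_iff_forall_covBy f).2 fun a b hab =>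
    have hcover := hf.2.2.2.1 a b ⟨hab.le, hab.ne, fun _ => hab.eq_or_eq⟩
    lt_of_le_of_ne hcover.1 hcover.2.1
  have hlt : f x < f y := hmono (lt_of_le_of_ne hxy hne)
  exact ⟨hlt.le, hlt.ne⟩

theorem IsHom.le (hX : X.IsCoalg) (hY : Y.IsCoalg) {f : X.carrier → Y.carrier}
    (hf : IsHom X Y f) {x y : X.carrier} (hxy : X.le x y) : Y.le (f x) (f y) := by
  by_cases hne : x = y
  · exact hne ▸ hY.1 _
  · exact (hf.le_and_ne hX hY hxy hne).1

theorem IsHom.injective_of_isPath (hX : X.IsCoalg) (hY : Y.IsCoalg) (hpath : X.IsPath)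
    {f : X.carrier → Y.carrier} (hf : IsHom X Y f) : Function.Injective f := by
  intro x y hxy
  by_contra hne
  rcases hpath.2 x y with hle | hle
  · exact (hf.le_and_ne hX hY hle hne).2 hxy
  · exact (hf.le_and_ne hX hY hle (Ne.symm hne)).2 hxy.symm

/-- The members of the family `v` are pairwise comparable in the forest order. -/
def IsChain (X : PObj V k) {ι : Type} (v : ι → X.carrier) : Prop :=
  ∀ i j, X.le (v i) (v j) ∨ X.le (v j) (v i)

/-- The down-set of the forest order generated by a family of elements. -/
def downset (X : PObj V k) {ι : Type} (v : ι → X.carrier) : Set X.carrier :=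
  {x | ∃ i, X.le x (v i)}

/-- The induced substructure on a set of elements, with the induced order and pebbling function. -/
def restrict (X : PObj V k) (S : Set X.carrier) : PObj V k where
  carrier := S
  rel r v := X.rel r fun i => (v i).1
  ieq x y := X.ieq x.1 y.1
  le x y := X.le x.1 y.1
  peb x := X.peb x.1

theorem adj_of_adj_restrict {S : Set X.carrier} {x y : S} (hxy : (X.restrict S).Adj x y) :
    X.Adj x.1 y.1 := by
  refine ⟨fun h => hxy.1 (Subtype.ext h), hxy.2.imp_left ?_⟩
  rintro ⟨r, v, hv, ⟨i, rfl⟩, ⟨j, rfl⟩⟩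
  exact ⟨r, _, hv, ⟨i, rfl⟩, ⟨j, rfl⟩⟩

theorem IsCoalg.restrict (hX : X.IsCoalg) (S : Set X.carrier) : (X.restrict S).IsCoalg := by
  obtain ⟨hrefl, htrans, hanti, hforest, hadj, hpeb⟩ := hX
  refine ⟨fun x => hrefl x.1, fun x y z => htrans x.1 y.1 z.1,
    fun x y hxy hyx => Subtype.ext (hanti _ _ hxy hyx),
    fun x => ⟨?_, fun y z => (hforest x.1).2 y.1 z.1⟩,
    fun x y hxy => hadj _ _ (adj_of_adj_restrict hxy),
    fun x y hxy hle hne z hxz hxz_ne => hpeb _ _ (adj_of_adj_restrict hxy) hle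
      (fun h => hne (Subtype.ext h)) _ hxz fun h => hxz_ne (Subtype.ext h)⟩
  exact (hforest x.1).1.preimage Subtype.val_injective.injOn

theorem isEmb_restrict_val {S : Set X.carrier} (hS : ∀ x ∈ S, ∀ y, X.le y x → y ∈ S) :
    IsEmb (X.restrict S) X Subtype.val := by
  refine ⟨⟨fun _ _ h => h, fun _ _ h => h, ?_, ?_, fun _ => rfl⟩, Subtype.val_injective,
    fun _ _ h => h, fun _ _ h => h⟩
  · exact fun x hx y hyx => congrArg Subtype.val (hx ⟨y, hS _ x.2 y hyx⟩ hyx)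
  · rintro x y ⟨hle, hne, hbetween⟩
    exact ⟨hle, fun h => hne (Subtype.ext h), fun z hxz hzy =>
      (hbetween ⟨z, hS _ y.2 z hzy⟩ hxz hzy).imp (congrArg Subtype.val) (congrArg Subtype.val)⟩

theorem IsCoalg.isPath_restrict_downset (hX : X.IsCoalg) {ι : Type} [Finite ι]
    {v : ι → X.carrier} (hv : X.IsChain v) : (X.restrict (X.downset v)).IsPath := by
  obtain ⟨-, htrans, -, hforest, -, -⟩ := hX
  constructor
  · have hfin : (⋃ i, {x | X.le x (v i)}).Finite := Set.finite_iUnion fun i => (hforest (v i)).1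
    exact (hfin.subset fun x hx => Set.mem_iUnion.2 hx).to_subtype
  · rintro ⟨x, i, hxi⟩ ⟨y, j, hyj⟩
    rcases hv i j with hij | hji
    · exact (hforest (v j)).2 x y (htrans _ _ _ hxi hij) hyj
    · exact (hforest (v i)).2 x y hxi (htrans _ _ _ hyj hji)

theorem IsPWEmb.isEmb_restrict_downset (hX : X.IsCoalg) {f : X.carrier → Y.carrier}
    (hf : IsPWEmb X Y f) {ι : Type} [Finite ι] {v : ι → X.carrier} (hv : X.IsChain v) :
    IsEmb (X.restrict (X.downset v)) Y fun x => f x.1 := by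
  have hlower : ∀ x ∈ X.downset v, ∀ y, X.le y x → y ∈ X.downset v :=
    fun x ⟨i, hi⟩ y hyx => ⟨i, hX.2.1 _ _ _ hyx hi⟩
  exact hf.2 _ (hX.restrict _) (hX.isPath_restrict_downset hv) _ (isEmb_restrict_val hlower)

theorem isPWEmb_iff (hX : X.IsCoalg) (hY : Y.IsCoalg) {f : X.carrier → Y.carrier} :
    IsPWEmb X Y f ↔ IsHom X Y f ∧
      (∀ r v, X.IsChain v → (Y.rel r fun i => f (v i)) → X.rel r v) ∧
      ∀ x y, X.le x y ∨ X.le y x → Y.ieq (f x) (f y) → X.ieq x y := by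
  constructor
  · intro hf
    refine ⟨hf.1, fun r v hv hrel => ?_, fun x y hxy hieq => ?_⟩
    · exact (hf.isEmb_restrict_downset hX hv).2.2.1 r (fun i => ⟨v i, i, hX.1 _⟩) hrel
    · have hchain : X.IsChain ![x, y] := by
        simpa [IsChain, Fin.forall_fin_two, hX.1, or_comm] using hxy
      exact (hf.isEmb_restrict_downset hX hchain).2.2.2 ⟨x, 0, hX.1 _⟩ ⟨y, 1, hX.1 _⟩ hieq
  · rintro ⟨hf, hrel, hieq⟩
    refine ⟨hf, fun P hP hpath m hm => ?_⟩
    have hcomparable (x y : P.carrier) : X.le (m x) (m y) ∨ X.le (m y) (m x) :=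
      (hpath.2 x y).imp (hm.1.le hP hX) (hm.1.le hP hX)
    have hfm : IsHom P Y fun p => f (m p) := hf.comp hm.1
    exact ⟨hfm, hfm.injective_of_isPath hP hY hpath,
      fun r v h => hm.2.2.1 r v (hrel r _ (fun _ _ => hcomparable _ _) h),
      fun x y h => hm.2.2.2 x y (hieq _ _ (hcomparable x y) h)⟩

end PObj

/-- Non-empty sequences of pebble moves on `γ`: the carrier of the co-free coalgebra `FP`. -/
abbrev Play (k : ℕ) (γ : Type) : Type := {l : List (Fin k × γ) // l ≠ []}

namespace Play

variable {k : ℕ} {γ : Type}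

/-- The last move of a play. -/
def last (s : Play k γ) : Fin k × γ := s.1.getLast s.2

/-- The play `l` followed by the move `m`. -/
def snoc (l : List (Fin k × γ)) (m : Fin k × γ) : Play k γ := ⟨l ++ [m], by simp⟩

@[simp]
theorem last_snoc (l : List (Fin k × γ)) (m : Fin k × γ) : (snoc l m).last = m := by
  simp [last, snoc]

theorem exists_eq_snoc (s : Play k γ) : ∃ l m, s = snoc l m :=
  ⟨s.1.dropLast, s.last, Subtype.ext (List.dropLast_append_getLast s.2).symm⟩

/-- The last move of `s` is still on the board after the moves `l`: they extend `s` without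
reusing the pebble of that move. -/
def IsActive (s : Play k γ) (l : List (Fin k × γ)) : Prop :=
  ∃ w, l = s.1 ++ w ∧ ∀ m ∈ w, m.1 ≠ s.last.1

theorem IsActive.isPrefix {s : Play k γ} {l : List (Fin k × γ)} (h : s.IsActive l) :
    s.1 <+: l :=
  let ⟨w, hl, _⟩ := h
  ⟨w, hl.symm⟩

theorem isActive_append_iff {s : Play k γ} {w : List (Fin k × γ)} :
    s.IsActive (s.1 ++ w) ↔ ∀ m ∈ w, m.1 ≠ s.last.1 := by
  simp [IsActive]

theorem isActive_self (s : Play k γ) : s.IsActive s.1 := ⟨[], by simp⟩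

theorem isActive_iff {s : Play k γ} {l : List (Fin k × γ)} :
    s.IsActive l ↔ s.1 <+: l ∧ ∀ w, l = s.1 ++ w → ∀ m ∈ w, m.1 ≠ s.last.1 := by
  constructor
  · refine fun h => ⟨h.isPrefix, ?_⟩
    rintro w rfl
    exact isActive_append_iff.1 h
  · rintro ⟨⟨w, rfl⟩, h⟩
    exact isActive_append_iff.2 (h w rfl)

theorem IsActive.of_isPrefix {s : Play k γ} {l l' : List (Fin k × γ)} (h : s.IsActive l)
    (hs : s.1 <+: l') (hl : l' <+: l) : s.IsActive l' := by
  obtain ⟨w, rfl⟩ := hs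
  obtain ⟨u, rfl⟩ := hl
  rw [List.append_assoc, isActive_append_iff] at h
  exact isActive_append_iff.2 fun m hm => h m (List.mem_append_left u hm)

theorem isActive_append_singleton_iff {s : Play k γ} {l : List (Fin k × γ)} {m : Fin k × γ} :
    s.IsActive (l ++ [m]) ↔ s = snoc l m ∨ s.IsActive l ∧ m.1 ≠ s.last.1 := by
  constructor
  · intro h
    rcases List.prefix_concat_iff.1 h.isPrefix with hs | ⟨w, rfl⟩
    · exact .inl (Subtype.ext hs)
    · rw [List.append_assoc, isActive_append_iff] at h
      exact .inr ⟨isActive_append_iff.2 fun x hx => h x (by simp [hx]), h m (by simp)⟩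
  · rintro (rfl | ⟨⟨w, rfl, hw⟩, hm⟩)
    · exact isActive_self _
    · rw [List.append_assoc, isActive_append_iff]
      simpa [or_imp, forall_and] using ⟨fun p c => hw (p, c), hm⟩

theorem IsActive.pebble_ne {s t : Play k γ} {l : List (Fin k × γ)} (h : s.IsActive l)
    (hst : s.1 <+: t.1) (htl : t.1 <+: l) (hne : s ≠ t) : s.last.1 ≠ t.last.1 := by
  have hactive : s.IsActive t.1 := h.of_isPrefix hst htl
  obtain ⟨u, m, rfl⟩ := t.exists_eq_snoc
  rw [last_snoc]
  exact ((isActive_append_singleton_iff.1 hactive).resolve_left hne).2.symm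

/-- Two plays are coherent if one extends the other without reusing its last pebble; this is the
condition that the relations of `FP` impose on any two of their arguments. -/
def Coherent (s t : Play k γ) : Prop := s.IsActive t.1 ∨ t.IsActive s.1

theorem Coherent.isPrefix_or_isPrefix {s t : Play k γ} (h : s.Coherent t) :
    s.1 <+: t.1 ∨ t.1 <+: s.1 :=
  h.imp IsActive.isPrefix IsActive.isPrefix

theorem coherent_comm {s t : Play k γ} : s.Coherent t ↔ t.Coherent s := or_comm

theorem coherent_iff_isActive {s t : Play k γ} (hst : s.1 <+: t.1) :
    s.Coherent t ↔ s.IsActive t.1 := by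
  refine ⟨fun h => h.elim id fun hts => ?_, .inl⟩
  rw [← hst.eq_of_length_le hts.isPrefix.length_le]
  exact s.isActive_self

theorem coherent_iff {s t : Play k γ} :
    s.Coherent t ↔ (s.1 <+: t.1 ∨ t.1 <+: s.1) ∧
      (∀ w, t.1 = s.1 ++ w → ∀ m ∈ w, m.1 ≠ s.last.1) ∧
      (∀ w, s.1 = t.1 ++ w → ∀ m ∈ w, m.1 ≠ t.last.1) := by
  constructor
  · refine fun h => ⟨h.isPrefix_or_isPrefix, fun w hw => ?_, fun w hw => ?_⟩
    · exact (isActive_iff.1 ((coherent_iff_isActive ⟨w, hw.symm⟩).1 h)).2 w hw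
    · exact (isActive_iff.1 ((coherent_iff_isActive ⟨w, hw.symm⟩).1 (coherent_comm.1 h))).2 w hw
  · rintro ⟨hst | hts, hs, ht⟩
    · exact .inl (isActive_iff.2 ⟨hst, hs⟩)
    · exact .inr (isActive_iff.2 ⟨hts, ht⟩)

theorem IsActive.coherent {s t : Play k γ} {l : List (Fin k × γ)} (hs : s.IsActive l)
    (ht : t.IsActive l) : s.Coherent t :=
  (List.prefix_or_prefix_of_prefix hs.isPrefix ht.isPrefix).imp
    (fun hst => hs.of_isPrefix hst ht.isPrefix) fun hts => ht.of_isPrefix hts hs.isPrefix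

theorem exists_forall_isActive {ι : Type} [Finite ι] {v : ι → Play k γ}
    (hv : ∀ i j, (v i).Coherent (v j)) : ∃ l, ∀ i, (v i).IsActive l := by
  cases isEmpty_or_nonempty ι
  · exact ⟨[], isEmptyElim⟩
  · obtain ⟨i, hi⟩ := Finite.exists_max fun i => (v i).1.length
    refine ⟨(v i).1, fun j => (hv j i).elim id fun hij => ?_⟩
    rw [hij.isPrefix.eq_of_length_le (hi j)]
    exact (v j).isActive_self

/-- On coherent families of plays, the map `f` between plays preserves and reflects equality and
all relations between the elements of the last moves. -/
def IsLocalIso {V : Vocab} {α β : Type} (A : Str V α) (B : Str V β)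
    (f : Play k α → Play k β) : Prop :=
  (∀ s t : Play k α, s.Coherent t → (s.last.2 = t.last.2 ↔ (f s).last.2 = (f t).last.2)) ∧
  ∀ (r : V.Rel) (v : Fin (V.ar r) → Play k α), (∀ i j, (v i).Coherent (v j)) →
    ((A.rel r fun i => (v i).last.2) ↔ B.rel r fun i => (f (v i)).last.2)

end Play

section CofreeCoalgebra

open Play

variable {V : Vocab} {k : ℕ} {α : Type} (A : Str V α)

theorem FP_rel_iff {r : V.Rel} {v : Fin (V.ar r) → Play k α} :
    (FP V k A).rel r v ↔
      (∀ i j, (v i).Coherent (v j)) ∧ A.rel r fun i => (v i).last.2 := by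
  simp only [coherent_iff, forall_and, and_assoc]
  refine and_congr_right fun _ => ⟨fun ⟨hv, hA⟩ => ⟨hv, fun i j => hv j i, hA⟩, ?_⟩
  exact fun ⟨hv, _, hA⟩ => ⟨hv, hA⟩

theorem FP_ieq_iff {s t : Play k α} :
    (FP V k A).ieq s t ↔ s.Coherent t ∧ s.last.2 = t.last.2 := by
  simp only [coherent_iff, and_assoc]
  rfl

theorem FP_isRoot_iff {s : Play k α} : (FP V k A).IsRoot s ↔ ∃ m, s = snoc [] m := by
  constructor
  · intro hs
    obtain ⟨m, l, hl⟩ := List.exists_cons_of_ne_nil s.2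
    exact ⟨m, (hs (snoc [] m) ⟨l, hl.symm⟩).symm⟩
  · rintro ⟨m, rfl⟩ t ht
    rcases List.prefix_concat_iff.1 ht with h | h
    · exact Subtype.ext h
    · exact absurd (List.prefix_nil.1 h) t.2

theorem FP_cover_iff {s t : Play k α} : (FP V k A).Cover s t ↔ ∃ m, t = snoc s.1 m := by
  constructor
  · rintro ⟨⟨w, hw⟩, hne, hbetween⟩
    rcases w with - | ⟨m, w⟩
    · exact absurd (Subtype.ext (by simpa using hw)) hne
    · refine ⟨m, ((hbetween (snoc s.1 m) ⟨[m], rfl⟩ ⟨w, ?_⟩).resolve_left fun h => ?_).symm⟩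
      · simpa [snoc] using hw
      · simpa [snoc] using congrArg Subtype.val h
  · rintro ⟨m, rfl⟩
    refine ⟨⟨[m], rfl⟩, fun h => by simpa [snoc] using congrArg Subtype.val h, ?_⟩
    intro z hsz hz
    rcases List.prefix_concat_iff.1 hz with h | h
    · exact .inr (Subtype.ext h)
    · exact .inl (Subtype.ext (h.eq_of_length_le hsz.length_le))

theorem coherent_of_FP_adj {s t : Play k α} (hst : (FP V k A).Adj s t) : s.Coherent t := by
  rcases hst.2 with ⟨r, v, hv, ⟨i, rfl⟩, ⟨j, rfl⟩⟩ | h | h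
  · exact ((FP_rel_iff A).1 hv).1 i j
  · exact ((FP_ieq_iff A).1 h).1
  · exact coherent_comm.1 ((FP_ieq_iff A).1 h).1

theorem FP_isCoalg : (FP V k A).IsCoalg := by
  refine ⟨fun _ => List.prefix_rfl, fun _ _ _ => List.IsPrefix.trans,
    fun s t hst hts => Subtype.ext (hst.eq_of_length_le hts.length_le),
    fun s => ⟨?_, fun _ _ => List.prefix_or_prefix_of_prefix⟩,
    fun s t hst => (coherent_of_FP_adj A hst).isPrefix_or_isPrefix, ?_⟩
  · have hfin : {l | l ∈ s.1.inits}.Finite := List.finite_toSet _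
    exact (hfin.preimage Subtype.val_injective.injOn).subset fun t => (List.mem_inits _ _).2
  · intro s t hadj hst _ u hsu hne hut
    exact ((coherent_iff_isActive hst).1 (coherent_of_FP_adj A hadj)).pebble_ne hsu hut hne

end CofreeCoalgebra

/-- A Duplicator strategy: the answer to a move of Spoiler, given Spoiler's earlier moves.  These
are the co-Kleisli maps `P_k A → B`, with the last move of the play as a separate argument. -/
abbrev Strategy (k : ℕ) (α β : Type) : Type := List (Fin k × α) → Fin k × α → β

namespace Strategy

open Play

variable {V : Vocab} {k : ℕ} {α β : Type}

/-- Duplicator's moves in the play where Spoiler makes the given moves. -/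
def replies : Strategy k α β → List (Fin k × α) → List (Fin k × β)
  | _, [] => []
  | d, m :: l => (m.1, d [] m) :: replies (fun h => d (m :: h)) l

/-- The placement of the pairs of pebbles reached from `ρ` when Spoiler makes the given moves. -/
def positionFrom : Strategy k α β → (Fin k → Option (α × β)) → List (Fin k × α) →
    Fin k → Option (α × β)
  | _, ρ, [] => ρ
  | d, ρ, m :: l =>
    positionFrom (fun h => d (m :: h)) (Function.update ρ m.1 (some (m.2, d [] m))) l

/-- The placement of the pairs of pebbles reached from the empty board. -/
def position (d : Strategy k α β) (l : List (Fin k × α)) : Fin k → Option (α × β) :=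
  d.positionFrom (fun _ => none) l

theorem replies_append (d : Strategy k α β) (l w : List (Fin k × α)) :
    d.replies (l ++ w) = d.replies l ++ replies (fun h => d (l ++ h)) w := by
  induction l generalizing d with
  | nil => rfl
  | cons m l ih => simp [replies, ih]

theorem map_fst_replies (d : Strategy k α β) (l : List (Fin k × α)) :
    (d.replies l).map Prod.fst = l.map Prod.fst := by
  induction l generalizing d with
  | nil => rfl
  | cons m l ih => simp [replies, ih]

theorem replies_isPrefix (d : Strategy k α β) {l l' : List (Fin k × α)} (h : l <+: l') :
    d.replies l <+: d.replies l' := by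
  obtain ⟨w, rfl⟩ := h
  exact ⟨_, (d.replies_append l w).symm⟩

theorem positionFrom_append_singleton (d : Strategy k α β) (ρ : Fin k → Option (α × β))
    (l : List (Fin k × α)) (m : Fin k × α) :
    d.positionFrom ρ (l ++ [m]) =
      Function.update (d.positionFrom ρ l) m.1 (some (m.2, d l m)) := by
  induction l generalizing d ρ with
  | nil => rfl
  | cons _ _ ih => exact ih _ _

theorem position_append_singleton (d : Strategy k α β) (l : List (Fin k × α)) (m : Fin k × α) :
    d.position (l ++ [m]) = Function.update (d.position l) m.1 (some (m.2, d l m)) :=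
  d.positionFrom_append_singleton _ l m

/-- The map `F_k(A) → F_k(B)` induced by a strategy (its co-Kleisli extension). -/
def coextend (d : Strategy k α β) (s : Play k α) : Play k β :=
  ⟨d.replies s.1, fun h => s.2 <| by simpa [h] using (d.map_fst_replies s.1).symm⟩

@[simp]
theorem coextend_snoc (d : Strategy k α β) (l : List (Fin k × α)) (m : Fin k × α) :
    d.coextend (snoc l m) = snoc (d.replies l) (m.1, d l m) :=
  Subtype.ext <| by simp [coextend, snoc, replies_append, replies]

theorem last_coextend_fst (d : Strategy k α β) (s : Play k α) :
    (d.coextend s).last.1 = s.last.1 := by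
  obtain ⟨l, m, rfl⟩ := s.exists_eq_snoc
  simp

theorem isActive_coextend_iff (d : Strategy k α β) {s : Play k α} {l : List (Fin k × α)}
    (hsl : s.1 <+: l) : (d.coextend s).IsActive (d.replies l) ↔ s.IsActive l := by
  obtain ⟨w, rfl⟩ := hsl
  have hpebbles {γ : Type} {u : List (Fin k × γ)} {p : Fin k} :
      (∀ m ∈ u, m.1 ≠ p) ↔ p ∉ u.map Prod.fst := by
    grind
  have hreplies : d.replies (s.1 ++ w) = (d.coextend s).1 ++ replies (fun h => d (s.1 ++ h)) w :=
    d.replies_append s.1 w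
  rw [hreplies, isActive_append_iff, isActive_append_iff, last_coextend_fst, hpebbles, hpebbles,
    map_fst_replies]

theorem coherent_coextend_iff (d : Strategy k α β) {s t : Play k α}
    (hst : s.1 <+: t.1 ∨ t.1 <+: s.1) : (d.coextend s).Coherent (d.coextend t) ↔ s.Coherent t := by
  wlog hle : s.1 <+: t.1 generalizing s t
  · rw [coherent_comm, this hst.symm (hst.resolve_left hle), coherent_comm]
  rw [coherent_iff_isActive hle, coherent_iff_isActive (d.replies_isPrefix hle)]
  exact d.isActive_coextend_iff hle

theorem position_eq_some_iff (d : Strategy k α β) {l : List (Fin k × α)} {p : Fin k}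
    {g : α × β} :
    d.position l p = some g ↔
      ∃ s : Play k α, s.IsActive l ∧ s.last = (p, g.1) ∧ (d.coextend s).last.2 = g.2 := by
  induction l using List.reverseRecOn with
  | nil =>
    refine ⟨fun h => by simp [position, positionFrom] at h, ?_⟩
    rintro ⟨s, hs, -⟩
    exact absurd (List.prefix_nil.1 hs.isPrefix) s.2
  | append_singleton l m ih =>
    rw [position_append_singleton]
    by_cases hp : p = m.1
    · subst hp
      rw [Function.update_self]
      constructor
      · rintro ⟨⟩
        exact ⟨snoc l m, isActive_self _, by simp⟩
      · rintro ⟨s, hs, hlast, hreply⟩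
        obtain rfl : s = snoc l m :=
          (isActive_append_singleton_iff.1 hs).resolve_right fun h => h.2 (by rw [hlast])
        rw [last_snoc] at hlast
        rw [coextend_snoc, last_snoc] at hreply
        exact congrArg some (Prod.ext (congrArg Prod.snd hlast) hreply)
    · rw [Function.update_of_ne hp, ih]
      refine exists_congr fun s => and_congr_left fun ⟨hlast, _⟩ => ?_
      rw [isActive_append_singleton_iff, hlast]
      refine ⟨fun h => .inr ⟨h, Ne.symm hp⟩, fun h => (h.resolve_left ?_).1⟩
      rintro rfl
      exact hp (by simpa using congrArg Prod.fst hlast.symm)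

variable {A : Str V α} {B : Str V β}

theorem isLocalIso_coextend_iff_forall_pebblesIso (d : Strategy k α β) :
    IsLocalIso A B d.coextend ↔ ∀ l, PebblesIso A B (d.position l) := by
  have hposition {s : Play k α} {l : List (Fin k × α)} (hs : s.IsActive l) :
      d.position l s.last.1 = some (s.last.2, (d.coextend s).last.2) :=
    d.position_eq_some_iff.2 ⟨s, hs, rfl, rfl⟩
  constructor
  · rintro ⟨heq, hrel⟩ l
    constructor
    · intro p q x x' y y' hp hq
      obtain ⟨s, hs, hs_last, rfl⟩ := d.position_eq_some_iff.1 hp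
      obtain ⟨t, ht, ht_last, rfl⟩ := d.position_eq_some_iff.1 hq
      simpa only [hs_last, ht_last] using heq s t (hs.coherent ht)
    · intro r v g hg
      choose s hs hs_last hs_reply using fun i => d.position_eq_some_iff.1 (hg i)
      simpa only [hs_last, hs_reply] using hrel r s fun i j => (hs i).coherent (hs j)
  · intro hiso
    constructor
    · intro s t hst
      obtain ⟨l, hs, ht⟩ : ∃ l, s.IsActive l ∧ t.IsActive l :=
        hst.elim (fun h => ⟨_, h, t.isActive_self⟩) fun h => ⟨_, s.isActive_self, h⟩
      exact (hiso l).1 _ _ _ _ _ _ (hposition hs) (hposition ht)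
    · intro r v hv
      obtain ⟨l, hl⟩ := exists_forall_isActive hv
      exact (hiso l).2 r _ _ fun i => hposition (hl i)

theorem FP_rel_coextend_iff (d : Strategy k α β) {r : V.Rel} {v : Fin (V.ar r) → Play k α}
    (hv : ∀ i j, (v i).1 <+: (v j).1 ∨ (v j).1 <+: (v i).1) :
    ((FP V k B).rel r fun i => d.coextend (v i)) ↔
      (∀ i j, (v i).Coherent (v j)) ∧ B.rel r fun i => (d.coextend (v i)).last.2 := by
  rw [FP_rel_iff]
  simp only [fun i j => d.coherent_coextend_iff (hv i j)]

theorem FP_ieq_coextend_iff (d : Strategy k α β) {s t : Play k α}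
    (hst : s.1 <+: t.1 ∨ t.1 <+: s.1) :
    (FP V k B).ieq (d.coextend s) (d.coextend t) ↔
      s.Coherent t ∧ (d.coextend s).last.2 = (d.coextend t).last.2 := by
  rw [FP_ieq_iff, d.coherent_coextend_iff hst]

theorem isRoot_coextend (d : Strategy k α β) {s : Play k α} (hs : (FP V k A).IsRoot s) :
    (FP V k B).IsRoot (d.coextend s) := by
  obtain ⟨m, rfl⟩ := (FP_isRoot_iff A).1 hs
  exact (FP_isRoot_iff B).2 ⟨_, d.coextend_snoc [] m⟩

theorem cover_coextend (d : Strategy k α β) {s t : Play k α} (hst : (FP V k A).Cover s t) :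
    (FP V k B).Cover (d.coextend s) (d.coextend t) := by
  obtain ⟨m, rfl⟩ := (FP_cover_iff A).1 hst
  exact (FP_cover_iff B).2 ⟨_, d.coextend_snoc s.1 m⟩

theorem isHom_coextend_of_isLocalIso {d : Strategy k α β} (hd : IsLocalIso A B d.coextend) :
    PObj.IsHom (FP V k A) (FP V k B) d.coextend := by
  refine ⟨fun r v hv => ?_, fun s t hst => ?_, fun _ => d.isRoot_coextend,
    fun _ _ => d.cover_coextend, d.last_coextend_fst⟩
  · obtain ⟨hcoh, hrel⟩ := (FP_rel_iff A).1 hv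
    exact (d.FP_rel_coextend_iff hv.1).2 ⟨hcoh, (hd.2 r v hcoh).1 hrel⟩
  · obtain ⟨hcoh, heq⟩ := (FP_ieq_iff A).1 hst
    exact (d.FP_ieq_coextend_iff hst.1).2 ⟨hcoh, (hd.1 s t hcoh).1 heq⟩

theorem isPWEmb_coextend_iff_isLocalIso (d : Strategy k α β) :
    PObj.IsPWEmb (FP V k A) (FP V k B) d.coextend ↔ IsLocalIso A B d.coextend := by
  refine (PObj.isPWEmb_iff (FP_isCoalg A) (FP_isCoalg B)).trans ?_
  constructor
  · rintro ⟨hhom, hrel, hieq⟩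
    constructor
    · intro s t hst
      have hle := hst.isPrefix_or_isPrefix
      refine ⟨fun h => ?_, fun h => ?_⟩
      · exact ((d.FP_ieq_coextend_iff hle).1 (hhom.2.1 s t ((FP_ieq_iff A).2 ⟨hst, h⟩))).2
      · exact ((FP_ieq_iff A).1 (hieq s t hle ((d.FP_ieq_coextend_iff hle).2 ⟨hst, h⟩))).2
    · intro r v hv
      have hchain i j : (v i).1 <+: (v j).1 ∨ (v j).1 <+: (v i).1 :=
        (hv i j).isPrefix_or_isPrefix
      refine ⟨fun h => ?_, fun h => ?_⟩
      · exact ((d.FP_rel_coextend_iff hchain).1 (hhom.1 r v ((FP_rel_iff A).2 ⟨hv, h⟩))).2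
      · exact ((FP_rel_iff A).1 (hrel r v hchain ((d.FP_rel_coextend_iff hchain).2 ⟨hv, h⟩))).2
  · refine fun hd => ⟨isHom_coextend_of_isLocalIso hd, fun r v hchain h => ?_, fun s t hle h => ?_⟩
    · obtain ⟨hcoh, hrel⟩ := (d.FP_rel_coextend_iff hchain).1 h
      exact (FP_rel_iff A).2 ⟨hcoh, (hd.2 r v hcoh).2 hrel⟩
    · obtain ⟨hcoh, heq⟩ := (d.FP_ieq_coextend_iff hle).1 h
      exact (FP_ieq_iff A).2 ⟨hcoh, (hd.1 s t hcoh).2 heq⟩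

theorem exists_coextend_eq_of_isHom {f : Play k α → Play k β}
    (hf : PObj.IsHom (FP V k A) (FP V k B) f) : ∃ d : Strategy k α β, d.coextend = f := by
  obtain ⟨-, -, hroot, hcover, hpeb⟩ := hf
  let d : Strategy k α β := fun l m => (f (snoc l m)).last.2
  have hlast (l : List (Fin k × α)) (m : Fin k × α) : (f (snoc l m)).last = (m.1, d l m) :=
    Prod.ext ((hpeb (snoc l m)).trans (congrArg Prod.fst (last_snoc l m))) rfl
  have hsnoc (l : List (Fin k × α)) (m : Fin k × α) : d.coextend (snoc l m) = f (snoc l m) := by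
    induction l using List.reverseRecOn generalizing m with
    | nil =>
      obtain ⟨c, hc⟩ : ∃ c, f (snoc [] m) = snoc [] c :=
        (FP_isRoot_iff B).1 (hroot _ ((FP_isRoot_iff A).2 ⟨m, rfl⟩))
      calc d.coextend (snoc [] m)
        _ = snoc [] (m.1, d [] m) := d.coextend_snoc [] m
        _ = snoc [] (f (snoc [] m)).last := by rw [hlast]
        _ = f (snoc [] m) := by rw [hc, last_snoc]
    | append_singleton l m' ih =>
      obtain ⟨c, hc⟩ : ∃ c, f (snoc (l ++ [m']) m) = snoc (f (snoc l m')).1 c :=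
        (FP_cover_iff B).1 (hcover (snoc l m') _ ((FP_cover_iff A).2 ⟨m, rfl⟩))
      calc d.coextend (snoc (l ++ [m']) m)
        _ = snoc (d.coextend (snoc l m')).1 (m.1, d (l ++ [m']) m) := d.coextend_snoc _ m
        _ = snoc (f (snoc l m')).1 (f (snoc (l ++ [m']) m)).last := by rw [ih, hlast]
        _ = f (snoc (l ++ [m']) m) := by rw [hc, last_snoc]
  refine ⟨d, funext fun s => ?_⟩
  obtain ⟨l, m, rfl⟩ := s.exists_eq_snoc
  exact hsnoc l m

theorem exists_forall_pebblesIso_iff :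
    (∃ d : Strategy k α β, ∀ l, PebblesIso A B (d.position l)) ↔ EPebWin V A B k := by
  constructor
  · rintro ⟨d, hd⟩
    refine ⟨fun ρ => ∃ l, d.position l = ρ, ⟨[], rfl⟩, ?_⟩
    rintro _ ⟨l, rfl⟩
    exact ⟨hd l, fun p a => ⟨d l (p, a), l ++ [(p, a)], d.position_append_singleton l (p, a)⟩⟩
  · rintro ⟨S, hempty, hS⟩
    choose answer hanswer using fun ρ : {ρ // S ρ} => (hS ρ.1 ρ.2).2
    let state (l : List (Fin k × α)) : {ρ // S ρ} :=
      l.foldl (fun ρ m => ⟨_, hanswer ρ m.1 m.2⟩) ⟨_, hempty⟩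
    let d : Strategy k α β := fun l m => answer (state l) m.1 m.2
    have hstate (l : List (Fin k × α)) : d.position l = (state l).1 := by
      induction l using List.reverseRecOn with
      | nil => rfl
      | append_singleton l m ih => simp [position_append_singleton, ih, state, d]
    exact ⟨d, fun l => hstate l ▸ (hS _ (state l).2).1⟩

end Strategy

theorem pathwise_embedding_iff_existential_pebble_game_general
    (V : Vocab) {α β : Type} (A : Str V α) (B : Str V β) (k : ℕ) :
    (∃ f, PObj.IsPWEmb (FP V k A) (FP V k B) f) ↔ EPebWin V A B k := by
  rw [← Strategy.exists_forall_pebblesIso_iff]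
  constructor
  · rintro ⟨f, hf⟩
    obtain ⟨d, rfl⟩ := Strategy.exists_coextend_eq_of_isHom hf.1
    exact ⟨d, d.isLocalIso_coextend_iff_forall_pebblesIso.1
      (d.isPWEmb_coextend_iff_isLocalIso.1 hf)⟩
  · rintro ⟨d, hd⟩
    exact ⟨d.coextend, d.isPWEmb_coextend_iff_isLocalIso.2
      (d.isLocalIso_coextend_iff_forall_pebblesIso.2 hd)⟩

/-- there exists a pathwise embedding `F_k^I(A) → F_k^I(B)` in `EM(P_k^I)`
if, and only if, Duplicator has a winning strategy in the existential `k`-pebble game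
from `A` to `B`. -/
theorem pathwise_embedding_iff_existential_pebble_game
    (V : Vocab) [Finite V.Rel] (har : ∀ r : V.Rel, V.ar r ≠ 0)
    {α β : Type} (A : Str V α) (B : Str V β) (k : ℕ) (hk : 0 < k) :
    (∃ f, PObj.IsPWEmb (FP V k A) (FP V k B) f) ↔ EPebWin V A B k :=
  pathwise_embedding_iff_existential_pebble_game_general V A B k
end
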